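/- arXiv:1101.3135 — 8 statements merged into one kernel-verified Lean document; each statement's English description precedes it below -/
import Mathlib

section
/- For every positive integer n and every complex number t with |t| < 1, the series Σ_{k=1}^∞ k^n t^k converges and equals t·A_n(t)/(1−t)^{n+1}, where A_n is the Eulerian polynomial. -/
open Polynomial

noncomputable section

/-- The Eulerian number `A(n,m) = ∑_{ℓ=0}^{m} (−1)^ℓ C(n+1,ℓ) (m−ℓ)^n`. -/
def eulerianNum (n m : ℕ) : ℝ :=
  ∑ ℓ ∈ Finset.range (m + 1), (-1 : ℝ) ^ ℓ * ((n + 1).choose ℓ) * ((m - ℓ : ℕ) : ℝ) ^ n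

/-- The Eulerian polynomial `A_n(t) = ∑_{j=0}^{n−1} A(n,j+1) t^j`. -/
def eulerianPoly (n : ℕ) : Polynomial ℝ :=
  ∑ j ∈ Finset.range n, C (eulerianNum n (j + 1)) * X ^ j

open Finset in
lemma eulerianNum_eq_zero (n m : ℕ) (h : n < m) : eulerianNum n m = 0 := by
  have h0 : eulerianNum n m = ∑ l ∈ Finset.range (n + 1 + 1),
      (-1 : ℝ) ^ l * ((n + 1).choose l) * ((m - l : ℕ) : ℝ) ^ n := by
    unfold eulerianNum
    symm
    apply Finset.sum_subset
    · intro x hx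
      simp only [Finset.mem_range] at *
      omega
    · intro x _ hx
      simp only [Finset.mem_range] at hx
      rw [Nat.choose_eq_zero_of_lt (by omega)]
      simp
  have h1 := congrFun (fwdDiff_iter_pow_eq_zero_of_lt (R := ℝ) (Nat.lt_succ_self n))
    ((m - (n + 1) : ℕ) : ℝ)
  rw [fwdDiff_iter_eq_sum_shift] at h1
  rw [h0, ← Finset.sum_range_reflect]
  simp only [Pi.zero_apply] at h1
  rw [← h1]
  apply Finset.sum_congr rfl
  intro k hk
  simp only [Finset.mem_range] at hk
  have e1 : n + 1 + 1 - 1 - k = n + 1 - k := by omega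
  have e2 : m - (n + 1 - k) = m - (n + 1) + k := by omega
  rw [e1, e2, Nat.choose_symm (by omega)]
  simp [zsmul_eq_mul]

lemma hasSum_one_sub_pow (N : ℕ) (t : ℂ) :
    ∑' l : ℕ, (-1 : ℂ) ^ l * (N.choose l) * t ^ l = (1 - t) ^ N := by
  rw [tsum_eq_sum (s := Finset.range (N + 1))]
  · rw [sub_eq_neg_add, add_pow]
    apply Finset.sum_congr rfl
    intro k _
    rw [neg_pow]
    ring
  · intro b hb
    simp only [Finset.mem_range] at hb
    rw [Nat.choose_eq_zero_of_lt (by omega)]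
    simp

/-- For every positive integer `n` and complex `t` with `|t| < 1`, the series
`∑_{k=1}^∞ k^n t^k` converges and equals `t·A_n(t)/(1−t)^(n+1)`. -/
theorem statement0 (n : ℕ) (hn : 1 ≤ n) (t : ℂ) (ht : ‖t‖ < 1) :
    HasSum (fun k : ℕ => (k : ℂ) ^ n * t ^ k)
      (t * Polynomial.aeval t (eulerianPoly n) / (1 - t) ^ (n + 1)) := by
  have hs : Summable (fun k : ℕ => (k : ℂ) ^ n * t ^ k) :=
    summable_pow_mul_geometric_of_norm_lt_one n ht
  have hsn : Summable (fun k : ℕ => ‖(k : ℂ) ^ n * t ^ k‖) :=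
    summable_norm_pow_mul_geometric_of_norm_lt_one n ht
  have hc : Summable (fun l : ℕ => ‖(-1 : ℂ) ^ l * ((n + 1).choose l) * t ^ l‖) := by
    apply summable_of_ne_finset_zero (s := Finset.range (n + 1 + 1))
    intro b hb
    simp only [Finset.mem_range] at hb
    rw [Nat.choose_eq_zero_of_lt (by omega)]
    simp
  have h1 : (1 - t) ≠ 0 := by
    intro h
    have : t = 1 := (sub_eq_zero.mp h).symm
    rw [this] at ht
    simp at ht
  have key := tsum_mul_tsum_eq_tsum_sum_range_of_summable_norm hc hsn
  rw [hasSum_one_sub_pow] at key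
  have hcoef : ∀ m : ℕ, ∑ l ∈ Finset.range (m + 1),
      ((-1 : ℂ) ^ l * ((n + 1).choose l) * t ^ l) * (((m - l : ℕ) : ℂ) ^ n * t ^ (m - l))
      = (eulerianNum n m : ℂ) * t ^ m := by
    intro m
    unfold eulerianNum
    push_cast
    rw [Finset.sum_mul]
    apply Finset.sum_congr rfl
    intro l hl
    simp only [Finset.mem_range] at hl
    have : t ^ m = t ^ l * t ^ (m - l) := by
      rw [← pow_add]
      congr 1
      omega
    rw [this]
    ring
  simp_rw [hcoef] at key
  rw [tsum_eq_sum (f := fun m : ℕ => (eulerianNum n m : ℂ) * t ^ m)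
    (s := Finset.range (n + 1))] at key
  · have h0 : eulerianNum n 0 = 0 := by
      have : n ≠ 0 := by omega
      simp [eulerianNum, this]
    rw [Finset.sum_range_succ', h0] at key
    have hv : t * Polynomial.aeval t (eulerianPoly n) / (1 - t) ^ (n + 1)
        = ∑' k : ℕ, (k : ℂ) ^ n * t ^ k := by
      rw [div_eq_iff (pow_ne_zero _ h1), mul_comm (∑' k : ℕ, _), key]
      simp only [eulerianPoly, map_sum, map_mul, map_pow, aeval_X, aeval_C, Finset.mul_sum]
      simp only [Complex.ofReal_zero, zero_mul, add_zero]
      apply Finset.sum_congr rfl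
      intro j _
      simp only [Complex.coe_algebraMap]
      ring
    rw [hv]
    exact hs.hasSum
  · intro b hb
    simp only [Finset.mem_range] at hb
    rw [eulerianNum_eq_zero n b (by omega)]
    simp
end
end

section
/- Let F, f, g be real polynomials with F(x) = a(x)f(x) + b(x)g(x) for real polynomials a, b, such that deg F = deg f or deg F = deg f + 1, f and g have only real roots, g ≼ f, and F and g have leading coefficients of the same sign. If b(r) ≤ 0 whenever f(r) = 0, then F has only real roots and f ≼ F. Moreover, if g ≺ f and b(r) < 0 whenever f(r) = 0, then f ≺ F. -/
open Polynomial

noncomputable section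

/-- A real polynomial is *standard* if it is identically zero or its leading
coefficient is positive. -/
def IsStandard (p : Polynomial ℝ) : Prop := p = 0 ∨ 0 < p.leadingCoeff

/-- `p` belongs to `RZ`: it has only real zeros, i.e. its real roots (with
multiplicity) account for its full degree. -/
def OnlyRealZeros (p : Polynomial ℝ) : Prop := p.roots.card = p.natDegree

/-- `g` alternates `f`: both have degree `n`, both factor over ℝ, and their roots
(in increasing order) satisfy `b 0 ≤ a 0 ≤ b 1 ≤ a 1 ≤ ⋯ ≤ b (n-1) ≤ a (n-1)`. -/
def Alternates (g f : Polynomial ℝ) : Prop :=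
  f ≠ 0 ∧ g ≠ 0 ∧ ∃ (n : ℕ) (a b : Fin n → ℝ),
    f.natDegree = n ∧ g.natDegree = n ∧
    f = C f.leadingCoeff * ∏ i, (X - C (a i)) ∧
    g = C g.leadingCoeff * ∏ i, (X - C (b i)) ∧
    (∀ i, b i ≤ a i) ∧
    (∀ (i : Fin n) (h : (i : ℕ) + 1 < n), a i ≤ b ⟨(i : ℕ) + 1, h⟩)

/-- `g` strictly alternates `f`. -/
def StrictAlternates (g f : Polynomial ℝ) : Prop :=
  f ≠ 0 ∧ g ≠ 0 ∧ ∃ (n : ℕ) (a b : Fin n → ℝ),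
    f.natDegree = n ∧ g.natDegree = n ∧
    f = C f.leadingCoeff * ∏ i, (X - C (a i)) ∧
    g = C g.leadingCoeff * ∏ i, (X - C (b i)) ∧
    (∀ i, b i < a i) ∧
    (∀ (i : Fin n) (h : (i : ℕ) + 1 < n), a i < b ⟨(i : ℕ) + 1, h⟩)

/-- `g` interlaces `f`: `deg f = deg g + 1`, both factor over ℝ, and their roots
(in increasing order) satisfy `a 0 ≤ b 0 ≤ a 1 ≤ ⋯ ≤ b (n-1) ≤ a n`. -/
def Interlaces (g f : Polynomial ℝ) : Prop :=
  f ≠ 0 ∧ g ≠ 0 ∧ ∃ (n : ℕ) (a : Fin (n + 1) → ℝ) (b : Fin n → ℝ),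
    f.natDegree = n + 1 ∧ g.natDegree = n ∧
    f = C f.leadingCoeff * ∏ i, (X - C (a i)) ∧
    g = C g.leadingCoeff * ∏ i, (X - C (b i)) ∧
    ∀ i : Fin n, a i.castSucc ≤ b i ∧ b i ≤ a i.succ

/-- `g` strictly interlaces `f`. -/
def StrictInterlaces (g f : Polynomial ℝ) : Prop :=
  f ≠ 0 ∧ g ≠ 0 ∧ ∃ (n : ℕ) (a : Fin (n + 1) → ℝ) (b : Fin n → ℝ),
    f.natDegree = n + 1 ∧ g.natDegree = n ∧
    f = C f.leadingCoeff * ∏ i, (X - C (a i)) ∧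
    g = C g.leadingCoeff * ∏ i, (X - C (b i)) ∧
    ∀ i : Fin n, a i.castSucc < b i ∧ b i < a i.succ

/-- `g ≼ f`: `g` alternates or interlaces `f`. -/
def PrecEq (g f : Polynomial ℝ) : Prop := Alternates g f ∨ Interlaces g f

/-- `g ≺ f`: `g` strictly alternates or strictly interlaces `f`. -/
def Prec (g f : Polynomial ℝ) : Prop := StrictAlternates g f ∨ StrictInterlaces g f


/-- Product over even positions of a list. -/
def evP : List ℝ → Polynomial ℝ
  | [] => 1
  | [c] => X - C c
  | c :: _ :: t => (X - C c) * evP t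

theorem evP_cons (c : ℝ) (t : List ℝ) : evP (c :: t) = (X - C c) * evP t.tail := by
  cases t <;> simp [evP]

theorem evP_monic : ∀ L : List ℝ, (evP L).Monic
  | [] => by simp [evP]
  | [c] => by simpa [evP] using monic_X_sub_C c
  | c :: _ :: t => (monic_X_sub_C c).mul (evP_monic t)

theorem evP_splits : ∀ L : List ℝ, (evP L).Splits
  | [] => by simp [evP]
  | [c] => by simpa [evP] using Splits.X_sub_C c
  | c :: _ :: t => (Splits.X_sub_C c).mul (evP_splits t)

theorem evP_root : ∀ (L : List ℝ) (r : ℝ), (evP L).eval r = 0 → r ∈ L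
  | [], r, h => by simp [evP] at h
  | [c], r, h => by
      simp only [evP, eval_sub, eval_X, eval_C] at h
      simp [sub_eq_zero.mp h]
  | c :: d :: t, r, h => by
      simp only [evP, eval_mul, eval_sub, eval_X, eval_C, mul_eq_zero] at h
      rcases h with h | h
      · simp [sub_eq_zero.mp h]
      · simp [evP_root t r h]

theorem evP_nonneg : ∀ (L : List ℝ) (r : ℝ), (∀ c ∈ L, c ≤ r) → 0 ≤ (evP L).eval r
  | [], r, h => by simp [evP]
  | [c], r, h => by
      simpa [evP] using h
  | c :: d :: t, r, h => by
      simp only [evP, eval_mul, eval_sub, eval_X, eval_C]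
      exact mul_nonneg (by linarith [h c (by simp)]) (evP_nonneg t r (fun x hx => h x (by simp [hx])))

theorem evP_split (x y : ℝ) (L2 : List ℝ) : ∀ L1 : List ℝ,
    (evP (L1 ++ x :: y :: L2) = (X - C x) * evP (L1 ++ L2) ∧
      evP (L1 ++ x :: y :: L2).tail = (X - C y) * evP (L1 ++ L2).tail) ∨
    (evP (L1 ++ x :: y :: L2) = (X - C y) * evP (L1 ++ L2) ∧
      evP (L1 ++ x :: y :: L2).tail = (X - C x) * evP (L1 ++ L2).tail)
  | [] => by
      left
      simp [evP, evP_cons]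
  | c :: t => by
      rcases evP_split x y L2 t with ⟨h1, h2⟩ | ⟨h1, h2⟩
      · right
        simp only [List.cons_append, evP_cons, List.tail_cons, h1, h2, and_true]
        ring
      · left
        simp only [List.cons_append, evP_cons, List.tail_cons, h1, h2, and_true]
        ring

/-- locate a root in an even position -/
theorem evP_locate : ∀ (L : List ℝ) (r : ℝ), (evP L).eval r = 0 →
    (∃ L1 s L2, L = L1 ++ r :: s :: L2 ∧ evP L = (X - C r) * evP (L1 ++ L2) ∧
      evP L.tail = (X - C s) * evP (L1 ++ L2).tail) ∨
    (∃ L1, L = L1 ++ [r] ∧ evP L = (X - C r) * evP L1 ∧ evP L.tail = evP L1.tail)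
  | [], r, h => by simp [evP] at h
  | [c], r, h => by
      simp only [evP, eval_sub, eval_X, eval_C] at h
      have := sub_eq_zero.mp h
      subst this
      right
      exact ⟨[], by simp [evP]⟩
  | c :: d :: t, r, h => by
      by_cases hc : r = c
      · subst hc
        left
        exact ⟨[], d, t, by simp [evP, evP_cons]⟩
      · simp only [evP, eval_mul, eval_sub, eval_X, eval_C, mul_eq_zero, sub_eq_zero, hc,
          false_or] at h
        rcases evP_locate t r h with ⟨L1, s, L2, h0, h1, h2⟩ | ⟨L1, h0, h1, h2⟩
        · left
          refine ⟨c :: d :: L1, s, L2, by simp [h0], ?_, ?_⟩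
          · simp only [evP, h1, List.cons_append]; ring
          · simp only [evP_cons, h2, List.cons_append, List.tail_cons]; ring
        · right
          refine ⟨c :: d :: L1, by simp [h0], ?_, ?_⟩
          · simp only [evP, h1]; ring
          · simp only [evP_cons, h2, List.tail_cons]

theorem strict_or_dup : ∀ L : List ℝ, L.Pairwise (fun x y => y ≤ x) →
    L.Pairwise (fun x y => y < x) ∨ ∃ L1 x L2, L = L1 ++ x :: x :: L2
  | [], _ => by simp
  | [c], _ => by simp
  | c :: d :: t, h => by
      rw [List.pairwise_cons] at h
      rcases strict_or_dup (d :: t) h.2 with h2 | ⟨L1, x, L2, h2⟩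
      · rcases (h.1 d (by simp)).lt_or_eq with h3 | h3
        · left
          rw [List.pairwise_cons]
          refine ⟨?_, h2⟩
          intro y hy
          rcases List.mem_cons.mp hy with rfl | hy
          · exact h3
          · exact ((List.pairwise_cons.mp h2).1 y hy).trans h3
        · right; exact ⟨[], c, t, by simp [h3]⟩
      · right; exact ⟨c :: L1, x, L2, by simp [h2]⟩

theorem evP_common : ∀ L : List ℝ, L.Pairwise (fun x y => y < x) →
    ∀ r : ℝ, (evP L).eval r = 0 → (evP L.tail).eval r ≠ 0
  | [], _, r, h => by simp [evP] at h
  | c :: t, hp, r, h => by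
      intro h2
      rw [List.pairwise_cons] at hp
      rw [evP_cons, eval_mul, mul_eq_zero] at h
      rw [List.tail_cons] at h2
      rcases h with h | h
      · have hr := hp.1 r (evP_root t r h2)
        simp only [eval_sub, eval_X, eval_C] at h
        linarith
      · exact evP_common t hp.2 r h2 h

theorem insert_pair (x : ℝ) : ∀ L : List ℝ, L.Pairwise (fun x y => y ≤ x) →
    ∃ L1 L2, L = L1 ++ L2 ∧ (L1 ++ x :: x :: L2).Pairwise (fun x y => y ≤ x)
  | [], _ => ⟨[], [], by simp⟩
  | c :: t, h => by
      rw [List.pairwise_cons] at h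
      by_cases hx : c ≤ x
      · refine ⟨[], c :: t, rfl, ?_⟩
        simp only [List.nil_append, List.pairwise_cons, List.mem_cons]
        refine ⟨?_, ?_, h⟩
        · rintro a (rfl | rfl | ha)
          · exact le_rfl
          · exact hx
          · exact (h.1 a ha).trans hx
        · rintro a (rfl | ha)
          · exact hx
          · exact (h.1 a ha).trans hx
      · obtain ⟨L1, L2, h1, h2⟩ := insert_pair x t h.2
        refine ⟨c :: L1, L2, by simp [h1], ?_⟩
        rw [List.cons_append, List.pairwise_cons]
        refine ⟨?_, h2⟩
        intro a ha
        have : a = x ∨ a ∈ t := by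
          rw [h1]; simp only [List.mem_append, List.mem_cons] at ha ⊢; tauto
        rcases this with rfl | ha
        · linarith
        · exact h.1 a ha

theorem exists_factor (F : Polynomial ℝ) (hF : F.Monic) (d : ℝ) (h : F.eval d = 0) :
    ∃ F1 : Polynomial ℝ, F1.Monic ∧ F = (X - C d) * F1 ∧ F.natDegree = F1.natDegree + 1 := by
  obtain ⟨F1, h1⟩ := dvd_iff_isRoot.mpr h
  have hm : F1.Monic := by
    have := hF; rw [h1] at this
    exact (monic_X_sub_C d).of_mul_monic_left this
  refine ⟨F1, hm, h1, ?_⟩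
  rw [h1, (monic_X_sub_C d).natDegree_mul hm, natDegree_X_sub_C, add_comm]

theorem natDegree_lin (r : ℝ) (L : List ℝ) :
    ((X - C r) * evP L).natDegree = (evP L).natDegree + 1 := by
  rw [(monic_X_sub_C r).natDegree_mul (evP_monic L), natDegree_X_sub_C, add_comm]

theorem base_case (u : ℝ) (F : Polynomial ℝ) (hF : F.Monic) (hu : 0 < F.eval u)
    (hd : F.natDegree = 0 ∨ F.natDegree = 1) :
    ∃ M : List ℝ, (u :: M).Pairwise (fun x y => y < x) ∧ F = evP M ∧ 1 = evP M.tail := by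
  rcases hd with hd | hd
  · exact ⟨[], by simp, by simp [evP, hF.natDegree_eq_zero.mp hd], by simp [evP]⟩
  · have h := hF.eq_X_add_C hd
    refine ⟨[-F.coeff 0], ?_, ?_, by simp [evP]⟩
    · rw [h] at hu
      simp only [eval_add, eval_X, eval_C] at hu
      simp
      linarith
    · simpa [evP] using h

theorem strict_step : ∀ (L : List ℝ) (u : ℝ) (F : Polynomial ℝ), F.Monic → 0 < F.eval u →
    (u :: L).Pairwise (fun x y => y < x) →
    (F.natDegree = (evP L).natDegree ∨ F.natDegree = (evP L).natDegree + 1) →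
    (∀ r, (evP L).eval r = 0 → F.eval r * (evP L.tail).eval r < 0) →
    ∃ M : List ℝ, (u :: M).Pairwise (fun x y => y < x) ∧ F = evP M ∧ evP L = evP M.tail
  | [], u, F, hF, hu, _, hd, _ => base_case u F hF hu (by simpa [evP] using hd)
  | r :: t, u, F, hF, hu, hL, hd, hs => by
      rw [List.pairwise_cons] at hL
      obtain ⟨hLu, hL⟩ := hL
      have hru := hLu r (by simp)
      have hL' := hL
      rw [List.pairwise_cons] at hL
      have hroot : (evP (r :: t)).eval r = 0 := by simp [evP_cons]
      have hpos : 0 < (evP t).eval r :=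
        lt_of_le_of_ne (evP_nonneg t r (fun c hc => (hL.1 c hc).le))
          (evP_common _ hL' r hroot).symm
      have hFr : F.eval r < 0 := by
        have := hs r hroot
        simp only [List.tail_cons] at this
        by_contra hc
        exact absurd this (not_lt.mpr (mul_nonneg (not_lt.mp hc) hpos.le))
      obtain ⟨d, hd1, hd2⟩ := intermediate_value_Ioo hru.le (F.continuous.continuousOn)
        (show (0:ℝ) ∈ Set.Ioo _ _ from ⟨hFr, hu⟩)
      obtain ⟨F1, hF1, hFF, hdeg⟩ := exists_factor F hF d hd2
      have hF1r : 0 < F1.eval r := by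
        rw [hFF, eval_mul] at hFr
        simp only [eval_sub, eval_X, eval_C] at hFr
        by_contra hc
        exact absurd hFr (not_lt.mpr (mul_nonneg_of_nonpos_of_nonpos (by linarith [hd1.1]) (not_lt.mp hc)))
      have fin : ∀ M : List ℝ, (r :: M).Pairwise (fun x y => y < x) → F1 = evP M →
          evP t.tail = evP M.tail →
          ∃ M : List ℝ, (u :: M).Pairwise (fun x y => y < x) ∧ F = evP M ∧
            evP (r :: t) = evP M.tail := by
        intro M h1 h2 h3
        refine ⟨d :: r :: M, ?_, ?_, ?_⟩
        · have hM := h1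
          simp only [List.pairwise_cons, List.mem_cons] at h1 ⊢
          refine ⟨?_, ?_, h1⟩
          · rintro a (rfl | rfl | ha)
            · exact hd1.2
            · exact hru
            · exact (h1.1 a ha).trans hru
          · rintro a (rfl | ha)
            · exact hd1.1
            · exact (h1.1 a ha).trans hd1.1
        · rw [hFF, h2]; simp [evP]
        · simp [evP_cons, h3]
      rw [evP_cons, natDegree_lin] at hd
      match t, hL, hs, fin, hd with
      | [], hL, hs, fin, hd =>
        obtain ⟨M, h1, h2, h3⟩ := base_case r F1 hF1 hF1r (by simp [evP] at hd; omega)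
        exact fin M h1 h2 (by simpa [evP] using h3)
      | s :: L', hL, hs, fin, hd =>
        have hsr := hL.1 s (by simp)
        obtain ⟨M, h1, h2, h3⟩ := strict_step L' r F1 hF1 hF1r
          (by
            rw [List.pairwise_cons]
            exact ⟨fun a ha => hL.1 a (by simp [ha]), (List.pairwise_cons.mp hL.2).2⟩)
          (by simp only [List.tail_cons] at hd; omega)
          (by
            intro ρ hρ
            have h := hs ρ (by simp [evP, hρ])
            have hρs : ρ < s := (List.pairwise_cons.mp hL.2).1 ρ (evP_root _ _ hρ)
            rw [hFF] at h
            simp only [List.tail_cons, evP_cons, eval_mul, eval_sub, eval_X, eval_C] at h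
            have h0 : 0 < (ρ - d) * (ρ - s) :=
              mul_pos_of_neg_of_neg (by linarith [hd1.1]) (by linarith)
            by_contra hc
            have := mul_nonneg h0.le (not_lt.mp hc)
            nlinarith)
        exact fin M h1 h2 (by simpa using h3)

theorem strict_case (L : List ℝ) (F : Polynomial ℝ) (hF : F.Monic)
    (hL : L.Pairwise (fun x y => y < x))
    (hd : F.natDegree = (evP L).natDegree ∨ F.natDegree = (evP L).natDegree + 1)
    (hs : ∀ r, (evP L).eval r = 0 → F.eval r * (evP L.tail).eval r < 0) :
    ∃ M : List ℝ, M.Pairwise (fun x y => y < x) ∧ F = evP M ∧ evP L = evP M.tail := by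
  have h1 : ∀ᶠ u in Filter.atTop, 0 < F.eval u := by
    by_cases h0 : F.natDegree = 0
    · rw [hF.natDegree_eq_zero.mp h0]; simp
    · have := F.tendsto_atTop_of_leadingCoeff_nonneg
        (natDegree_pos_iff_degree_pos.mp (Nat.pos_of_ne_zero h0)) (by rw [hF.leadingCoeff]; norm_num)
      exact this.eventually_gt_atTop 0
  have h2 : ∀ᶠ u in Filter.atTop, ∀ c ∈ L, c < u := by
    cases L with
    | nil => simp
    | cons r t =>
      filter_upwards [Filter.eventually_gt_atTop r] with u hu c hc
      rcases List.mem_cons.mp hc with rfl | hc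
      · exact hu
      · exact ((List.pairwise_cons.mp hL).1 c hc).trans hu
  obtain ⟨u, hu1, hu2⟩ := (h1.and h2).exists
  obtain ⟨M, hM, h⟩ := strict_step L u F hF hu1 (List.pairwise_cons.mpr ⟨hu2, hL⟩) hd hs
  exact ⟨M, (List.pairwise_cons.mp hM).2, h⟩

theorem weak_case : ∀ (n : ℕ) (L : List ℝ), L.length = n → ∀ (F a b : Polynomial ℝ), F.Monic →
    F = a * evP L + b * evP L.tail →
    L.Pairwise (fun x y => y ≤ x) →
    (F.natDegree = (evP L).natDegree ∨ F.natDegree = (evP L).natDegree + 1) →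
    (∀ r, (evP L).eval r = 0 → b.eval r ≤ 0) →
    ∃ M : List ℝ, M.Pairwise (fun x y => y ≤ x) ∧ F = evP M ∧ evP L = evP M.tail := by
  intro n
  induction n using Nat.strong_induction_on with
  | _ n ih =>
  intro L hn F a b hF hFe hL hd hb
  have key : ∀ (r : ℝ) (L' : List ℝ) (a' b' : Polynomial ℝ), L'.length < n →
      evP L = (X - C r) * evP L' →
      F = (X - C r) * (a' * evP L' + b' * evP L'.tail) →
      L'.Pairwise (fun x y => y ≤ x) → (∀ r, (evP L').eval r = 0 → b'.eval r ≤ 0) →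
      ∃ M : List ℝ, M.Pairwise (fun x y => y ≤ x) ∧ F = evP M ∧ evP L = evP M.tail := by
    intro r L' a' b' hl hP hF' hL' hb'
    obtain ⟨F1, hF1, hFF, hdeg⟩ := exists_factor F hF r (by rw [hF']; simp)
    have hF1e : F1 = a' * evP L' + b' * evP L'.tail :=
      mul_left_cancel₀ (X_sub_C_ne_zero r) (hFF.symm.trans hF')
    obtain ⟨M, h1, h2, h3⟩ := ih _ hl L' rfl F1 a' b' hF1 hF1e hL'
      (by rw [hP, natDegree_lin] at hd; omega) hb'
    obtain ⟨M1, M2, h4, h5⟩ := insert_pair r M h1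
    refine ⟨_, h5, ?_⟩
    rw [hFF, hP, h2, h3, h4]
    rcases evP_split r r M2 M1 with ⟨h6, h7⟩ | ⟨h6, h7⟩ <;> exact ⟨h6.symm, h7.symm⟩
  rcases strict_or_dup L hL with hLs | ⟨L1, x, L2, rfl⟩
  · by_cases hr : ∃ r, (evP L).eval r = 0 ∧ F.eval r = 0
    · obtain ⟨r, hr, hFr⟩ := hr
      have hbr : b.eval r = 0 := by
        have := evP_common L hLs r hr
        rw [hFe] at hFr
        simp only [eval_add, eval_mul, hr, mul_zero, zero_add, mul_eq_zero] at hFr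
        tauto
      obtain ⟨b1, hb1⟩ := dvd_iff_isRoot.mpr hbr
      rcases evP_locate L r hr with ⟨L1, s, L2, h0, h1, h2⟩ | ⟨L1, h0, h1, h2⟩
      · have hsub : (L1 ++ L2).Sublist L := by
          rw [h0]
          exact (List.Sublist.refl L1).append (((List.Sublist.refl L2).cons s).cons r)
        refine key r (L1 ++ L2) a (b1 * (X - C s)) (by rw [← hn, h0]; simp) h1 ?_ (hL.sublist hsub) ?_
        · rw [hFe, h1, h2, hb1]; ring
        · intro ρ hρ
          have h3 := hb ρ (by rw [h1]; simp [hρ])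
          have h4 : (r < ρ ∧ s < ρ) ∨ (ρ < r ∧ ρ < s) := by
            rw [h0] at hLs
            simp only [List.pairwise_append, List.pairwise_cons, List.mem_cons] at hLs
            rcases List.mem_append.mp (evP_root _ _ hρ) with h | h
            · left; exact ⟨hLs.2.2 ρ h r (by simp), hLs.2.2 ρ h s (by simp)⟩
            · right; exact ⟨hLs.2.1.1 ρ (by simp [h]), hLs.2.1.2.1 ρ h⟩
          rw [hb1] at h3
          simp only [eval_mul, eval_sub, eval_X, eval_C] at h3 ⊢
          rcases h4 with ⟨h4, h5⟩ | ⟨h4, h5⟩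
          · have : b1.eval ρ ≤ 0 := by
              by_contra hc
              have := mul_pos (sub_pos.mpr h4) (not_le.mp hc)
              linarith
            exact mul_nonpos_of_nonpos_of_nonneg this (by linarith)
          · have : 0 ≤ b1.eval ρ := by
              by_contra hc
              have := mul_pos_of_neg_of_neg (sub_neg.mpr h4) (not_le.mp hc)
              linarith
            exact mul_nonpos_of_nonneg_of_nonpos this (by linarith)
      · have hsub : L1.Sublist L := by rw [h0]; simp
        refine key r L1 a b1 (by rw [← hn, h0]; simp) h1 ?_ (hL.sublist hsub) ?_
        · rw [hFe, h1, h2, hb1]; ring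
        · intro ρ hρ
          have h3 := hb ρ (by rw [h1]; simp [hρ])
          have h4 : r < ρ := by
            rw [h0] at hLs
            simp only [List.pairwise_append] at hLs
            exact hLs.2.2 ρ (evP_root _ _ hρ) r (by simp)
          rw [hb1] at h3
          simp only [eval_mul, eval_sub, eval_X, eval_C] at h3
          by_contra hc
          have := mul_pos (sub_pos.mpr h4) (not_le.mp hc)
          linarith
    · push Not at hr
      obtain ⟨M, h1, h2⟩ := strict_case L F hF hLs hd (by
        intro r h
        have h1 := hr r h
        have h2 := hb r h
        have e : F.eval r = b.eval r * (evP L.tail).eval r := by rw [hFe]; simp [h]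
        have h3 := sq_nonneg ((evP L.tail).eval r)
        have h4 : F.eval r * (evP L.tail).eval r ≤ 0 := by rw [e]; nlinarith
        exact lt_of_le_of_ne h4 (mul_ne_zero h1 (evP_common L hLs r h)))
      exact ⟨M, h1.imp (fun h => le_of_lt h), h2⟩
  · have hsub : (L1 ++ L2).Sublist (L1 ++ x :: x :: L2) :=
      (List.Sublist.refl L1).append (((List.Sublist.refl L2).cons x).cons x)
    have h12 : evP (L1 ++ x :: x :: L2) = (X - C x) * evP (L1 ++ L2) ∧
      evP (L1 ++ x :: x :: L2).tail = (X - C x) * evP (L1 ++ L2).tail := by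
      rcases evP_split x x L2 L1 with h | h <;> exact h
    refine key x (L1 ++ L2) a b (by rw [← hn]; simp) h12.1 ?_ (hL.sublist hsub) ?_
    · rw [hFe, h12.1, h12.2]; ring
    · intro ρ hρ
      exact hb ρ (by rw [h12.1]; simp [hρ])

theorem to_list (R : ℝ → ℝ → Prop) : ∀ (n : ℕ) (a b : Fin n → ℝ), (∀ i, R (a i) (b i)) →
    (∀ (i : Fin n) (h : (i : ℕ) + 1 < n), R (b ⟨(i : ℕ) + 1, h⟩) (a i)) →
    ∃ L : List ℝ, L.IsChain R ∧ evP L = ∏ i, (X - C (a i)) ∧ evP L.tail = ∏ i, (X - C (b i)) ∧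
      ∀ u, (∀ i : Fin n, (i : ℕ) + 1 = n → R u (a i)) → (u :: L).IsChain R
  | 0, a, b, _, _ => ⟨[], by simp [evP]⟩
  | n + 1, a, b, h1, h2 => by
      obtain ⟨L, _, hP, hQ, hu⟩ := to_list R n (fun i => a i.castSucc) (fun i => b i.castSucc)
        (fun i => h1 _) (fun i h => h2 i.castSucc (by simp))
      have hc : (b (Fin.last n) :: L).IsChain R := by
        apply hu
        intro i hi
        have := h2 i.castSucc (by simp)
        convert this using 2
        ext; simp [hi]
      have hc2 : (a (Fin.last n) :: b (Fin.last n) :: L).IsChain R :=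
        List.IsChain.cons_cons (h1 _) hc
      refine ⟨a (Fin.last n) :: b (Fin.last n) :: L, hc2, ?_, ?_, ?_⟩
      · rw [Fin.prod_univ_castSucc, ← hP, evP, mul_comm]
      · rw [Fin.prod_univ_castSucc, ← hQ, List.tail_cons, evP_cons, mul_comm]
      · intro u h
        exact List.IsChain.cons_cons (h _ (by simp)) hc2

theorem of_list (R : ℝ → ℝ → Prop) : ∀ (n : ℕ) (L : List ℝ), L.length = 2 * n → L.IsChain R →
    ∃ a b : Fin n → ℝ, (∀ i, R (a i) (b i)) ∧
    (∀ (i : Fin n) (h : (i : ℕ) + 1 < n), R (b ⟨(i : ℕ) + 1, h⟩) (a i)) ∧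
    evP L = ∏ i, (X - C (a i)) ∧ evP L.tail = ∏ i, (X - C (b i)) ∧
      ∀ u, (u :: L).IsChain R → (∀ i : Fin n, (i : ℕ) + 1 = n → R u (a i))
  | 0, L, hl, _ => by
      have : L = [] := by simpa using hl
      subst this
      exact ⟨Fin.elim0, Fin.elim0, by simp [evP]⟩
  | n + 1, [], hl, _ => by simp at hl
  | n + 1, [c], hl, _ => by simp at hl; omega
  | n + 1, c :: d :: L, hl, hc => by
      rw [List.isChain_cons_cons] at hc
      have hcL : L.IsChain R := by
        have := hc.2.tail
        simpa using this
      obtain ⟨a, b, h1, h2, hP, hQ, hu⟩ := of_list R n L (by simp at hl; omega) hcL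
      refine ⟨Fin.snoc a c, Fin.snoc b d, ?_, ?_, ?_, ?_, ?_⟩
      · intro i
        refine Fin.lastCases ?_ (fun j => ?_) i
        · simpa using hc.1
        · simpa using h1 j
      · intro i
        refine Fin.lastCases ?_ (fun j => ?_) i
        · intro h; simp at h
        · intro h
          by_cases hj : (j : ℕ) + 1 = n
          · have e : (⟨(j.castSucc : ℕ) + 1, h⟩ : Fin (n + 1)) = Fin.last n := by
              ext; simp [hj]
            rw [e]
            simpa using hu d hc.2 j hj
          · have hj' : (j : ℕ) + 1 < n := by omega
            have e : (⟨(j.castSucc : ℕ) + 1, h⟩ : Fin (n + 1)) =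
              (⟨(j : ℕ) + 1, hj'⟩ : Fin n).castSucc := by
              ext; simp
            rw [e, Fin.snoc_castSucc, Fin.snoc_castSucc]
            exact h2 j hj'
      · rw [Fin.prod_univ_castSucc]; simp [evP, hP, mul_comm]
      · rw [Fin.prod_univ_castSucc]; simp [evP_cons, hQ, mul_comm]
      · intro u h i hi
        have e : i = Fin.last n := by ext; simp; omega
        subst e
        rw [List.isChain_cons_cons] at h
        simpa using h.1

/-- Common generalization of the (strict) alternation definitions. -/
def GAlt (R : ℝ → ℝ → Prop) (g f : Polynomial ℝ) : Prop :=
  f ≠ 0 ∧ g ≠ 0 ∧ ∃ (n : ℕ) (a b : Fin n → ℝ),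
    f.natDegree = n ∧ g.natDegree = n ∧
    f = C f.leadingCoeff * ∏ i, (X - C (a i)) ∧
    g = C g.leadingCoeff * ∏ i, (X - C (b i)) ∧
    (∀ i, R (a i) (b i)) ∧
    (∀ (i : Fin n) (h : (i : ℕ) + 1 < n), R (b ⟨(i : ℕ) + 1, h⟩) (a i))

/-- Common generalization of the (strict) interlacing definitions. -/
def GInt (R : ℝ → ℝ → Prop) (g f : Polynomial ℝ) : Prop :=
  f ≠ 0 ∧ g ≠ 0 ∧ ∃ (n : ℕ) (a : Fin (n + 1) → ℝ) (b : Fin n → ℝ),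
    f.natDegree = n + 1 ∧ g.natDegree = n ∧
    f = C f.leadingCoeff * ∏ i, (X - C (a i)) ∧
    g = C g.leadingCoeff * ∏ i, (X - C (b i)) ∧
    ∀ i : Fin n, R (b i) (a i.castSucc) ∧ R (a i.succ) (b i)

theorem list_of_prec (R : ℝ → ℝ → Prop) (g f : Polynomial ℝ) (h : GAlt R g f ∨ GInt R g f) :
    ∃ L : List ℝ, L.IsChain R ∧ f = C f.leadingCoeff * evP L ∧
      g = C g.leadingCoeff * evP L.tail := by
  rcases h with ⟨_, _, n, a, b, _, _, hf, hg, h1, h2⟩ | ⟨_, _, n, a, b, _, _, hf, hg, h1⟩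
  · obtain ⟨L, hL, hP, hQ, _⟩ := to_list R n a b h1 h2
    exact ⟨L, hL, by rwa [hP], by rwa [hQ]⟩
  · obtain ⟨L, hL, hP, hQ, hu⟩ := to_list R n b (fun i => a i.castSucc) (fun i => (h1 i).1)
      (fun i h => by
        have := (h1 i).2
        convert this using 2
        ext; simp)
    refine ⟨a (Fin.last n) :: L, hu _ ?_, ?_, by rwa [List.tail_cons, hP]⟩
    · intro i hi
      have := (h1 i).2
      convert this using 2
      ext; simp [hi]
    · rwa [evP_cons, hQ, mul_comm (X - C _), ← Fin.prod_univ_castSucc (fun i => X - C (a i))]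

theorem natDegree_aux (c : ℝ) (hc : c ≠ 0) (n : ℕ) (a : Fin n → ℝ) :
    (C c * ∏ i, (X - C (a i))).natDegree = n := by
  rw [natDegree_C_mul hc, natDegree_prod_of_monic _ _ (fun i _ => monic_X_sub_C _)]
  simp

theorem prec_of_list (R : ℝ → ℝ → Prop) (g f : Polynomial ℝ) (hf0 : f ≠ 0) (hg0 : g ≠ 0)
    (L : List ℝ) (hL : L.IsChain R) (hf : f = C f.leadingCoeff * evP L)
    (hg : g = C g.leadingCoeff * evP L.tail) : GAlt R g f ∨ GInt R g f := by
  have hlf : f.leadingCoeff ≠ 0 := by simpa using hf0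
  have hlg : g.leadingCoeff ≠ 0 := by simpa using hg0
  rcases Nat.even_or_odd' L.length with ⟨n, hn | hn⟩
  · left
    obtain ⟨a, b, h1, h2, hP, hQ, _⟩ := of_list R n L hn hL
    rw [hP] at hf
    rw [hQ] at hg
    refine ⟨hf0, hg0, n, a, b, ?_, ?_, hf, hg, h1, h2⟩
    · rw [hf]; exact natDegree_aux _ hlf _ _
    · rw [hg]; exact natDegree_aux _ hlg _ _
  · right
    cases L with
    | nil => simp at hn
    | cons c L =>
      have hcL : L.IsChain R := by simpa using hL.tail
      obtain ⟨b, a, h1, h2, hP, hQ, hu⟩ := of_list R n L (by simpa using hn) hcL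
      rw [List.tail_cons, hP] at hg
      have e : evP (c :: L) = ∏ i, (X - C ((Fin.snoc a c : Fin (n + 1) → ℝ) i)) := by
        rw [Fin.prod_univ_castSucc, evP_cons, hQ, mul_comm]; simp
      rw [e] at hf
      refine ⟨hf0, hg0, n, Fin.snoc a c, b, ?_, ?_, hf, hg, ?_⟩
      · rw [hf]; exact natDegree_aux _ hlf _ _
      · rw [hg]; exact natDegree_aux _ hlg _ _
      · intro i
        refine ⟨by simpa using h1 i, ?_⟩
        by_cases hi : (i : ℕ) + 1 = n
        · have e : i.succ = Fin.last n := by ext; simp [hi]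
          rw [e]
          simpa using hu c hL i hi
        · have hi' : (i : ℕ) + 1 < n := by omega
          have e : i.succ = (⟨(i : ℕ) + 1, hi'⟩ : Fin n).castSucc := by ext; simp
          rw [e, Fin.snoc_castSucc]
          exact h2 i hi'

theorem precEq_iff (g f : Polynomial ℝ) :
    PrecEq g f ↔ (GAlt (fun x y => y ≤ x) g f ∨ GInt (fun x y => y ≤ x) g f) := Iff.rfl

theorem prec_iff (g f : Polynomial ℝ) :
    Prec g f ↔ (GAlt (fun x y => y < x) g f ∨ GInt (fun x y => y < x) g f) := Iff.rfl

/-- Liu–Wang Theorem 2.1: let `F = a·f + b·g` with `deg F = deg f` or `deg f + 1`,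
`f, g ∈ RZ`, `g ≼ f`, and `F, g` having leading coefficients of the same sign.
If `b(r) ≤ 0` whenever `f(r) = 0`, then `F ∈ RZ` and `f ≼ F`.  Moreover, if
`g ≺ f` and `b(r) < 0` whenever `f(r) = 0`, then `f ≺ F`. -/
theorem statement6 (F f g a b : Polynomial ℝ)
    (hF : F = a * f + b * g)
    (hdeg : F.natDegree = f.natDegree ∨ F.natDegree = f.natDegree + 1)
    (hfRZ : OnlyRealZeros f) (hgRZ : OnlyRealZeros g)
    (hgf : PrecEq g f)
    (hsign : 0 < F.leadingCoeff * g.leadingCoeff)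
    (hb : ∀ r : ℝ, f.eval r = 0 → b.eval r ≤ 0) :
    (OnlyRealZeros F ∧ PrecEq f F) ∧
    ((Prec g f ∧ ∀ r : ℝ, f.eval r = 0 → b.eval r < 0) → Prec f F) := by
  have hFg : F.leadingCoeff ≠ 0 ∧ g.leadingCoeff ≠ 0 := by
    constructor <;> (intro h; simp [h] at hsign)
  obtain ⟨hlF, hlg⟩ := hFg
  have hF0 : F ≠ 0 := by simpa using hlF
  have hf0 : f ≠ 0 := by rcases hgf with h | h <;> exact h.1
  have hlf : f.leadingCoeff ≠ 0 := by simpa using hf0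
  obtain ⟨L, hL, hfL, hgL⟩ := list_of_prec _ _ _ ((precEq_iff g f).mp hgf)
  have : IsTrans ℝ (fun x y : ℝ => y ≤ x) := ⟨fun _ _ _ h1 h2 => le_trans h2 h1⟩
  have : IsTrans ℝ (fun x y : ℝ => y < x) := ⟨fun _ _ _ h1 h2 => lt_trans h2 h1⟩
  replace hL : L.Pairwise (fun x y => y ≤ x) := List.isChain_iff_pairwise.mp hL
  set k := F.leadingCoeff with hk
  set cg := g.leadingCoeff with hcg
  set cf := f.leadingCoeff with hcf
  have hF1m : (C k⁻¹ * F).Monic := by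
    rw [Monic, leadingCoeff_mul, leadingCoeff_C, ← hk, inv_mul_cancel₀ hlF]
  have hF1d : (C k⁻¹ * F).natDegree = F.natDegree := natDegree_C_mul (inv_ne_zero hlF)
  have hFk : F = C k * (C k⁻¹ * F) := by
    rw [← mul_assoc, ← C_mul, mul_inv_cancel₀ hlF, C_1, one_mul]
  have hfd : f.natDegree = (evP L).natDegree := by rw [hfL, natDegree_C_mul hlf]
  have hroot : ∀ r, (evP L).eval r = 0 → f.eval r = 0 := by
    intro r hr; rw [hfL]; simp [hr]
  have hF1e : C k⁻¹ * F = (C (k⁻¹ * cf) * a) * evP L + (C (k⁻¹ * cg) * b) * evP L.tail := by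
    rw [hF]
    conv_lhs => rw [hfL, hgL]
    simp only [C_mul]
    ring
  have hpos : 0 < k⁻¹ * cg := by
    have : k⁻¹ * cg = (k * cg) * (k⁻¹) ^ 2 := by field_simp
    rw [this]; positivity
  have hb1 : ∀ r, (evP L).eval r = 0 → (C (k⁻¹ * cg) * b).eval r ≤ 0 := by
    intro r hr
    rw [eval_mul, eval_C]
    exact mul_nonpos_of_nonneg_of_nonpos hpos.le (hb r (hroot r hr))
  rw [← hF1d, hfd] at hdeg
  refine ⟨?_, ?_⟩
  · obtain ⟨M, hM, h1, h2⟩ := weak_case _ L rfl _ _ _ hF1m hF1e hL hdeg hb1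
    rw [h1] at hFk
    rw [h2] at hfL
    refine ⟨?_, ?_⟩
    · rw [OnlyRealZeros, hFk]
      exact ((Splits.C k).mul (evP_splits M)).natDegree_eq_card_roots.symm
    · exact (precEq_iff f F).mpr
        (prec_of_list _ f F hF0 hf0 M (List.isChain_iff_pairwise.mpr hM) hFk hfL)
  · rintro ⟨hp, hbs⟩
    obtain ⟨L', hL', hfL', hgL'⟩ := list_of_prec _ _ _ ((prec_iff g f).mp hp)
    replace hL' : L'.Pairwise (fun x y => y < x) := List.isChain_iff_pairwise.mp hL'
    have hgr : ∀ r, (evP L).eval r = 0 → (evP L.tail).eval r ≠ 0 := by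
      intro r hr h2
      have h3 := hroot r hr
      have h4 : g.eval r = 0 := by rw [hgL]; simp [h2]
      rw [hfL', eval_mul, eval_C, mul_eq_zero] at h3
      rw [hgL', eval_mul, eval_C, mul_eq_zero] at h4
      exact evP_common L' hL' r (h3.resolve_left hlf) (h4.resolve_left hlg)
    have hLs : L.Pairwise (fun x y => y < x) := by
      rcases strict_or_dup L hL with h | ⟨L1, x, L2, rfl⟩
      · exact h
      · exfalso
        rcases evP_split x x L2 L1 with ⟨h1, h2⟩ | ⟨h1, h2⟩ <;>
          exact hgr x (by rw [h1]; simp) (by rw [h2]; simp)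
    obtain ⟨M, hM, h1, h2⟩ := strict_case L _ hF1m hLs hdeg (by
      intro r hr
      have h5 := mul_neg_of_pos_of_neg hpos (hbs r (hroot r hr))
      have h6 := pow_pos (abs_pos.mpr (hgr r hr)) 2
      rw [sq_abs] at h6
      rw [hF1e]
      simp only [eval_add, eval_mul, hr, mul_zero, zero_add, eval_C]
      nlinarith)
    rw [h1] at hFk
    rw [h2] at hfL
    exact (prec_iff f F).mpr
      (prec_of_list _ f F hF0 hf0 M (List.isChain_iff_pairwise.mpr hM) hFk hfL)
end
end

section
/- For every positive integer n and every complex t with |t| < 1, Li_{−n}(t) = Σ_{j=0}^{n} (−1)^{n+j} j! S(n+1, j+1) / (1−t)^{j+1}, where S(·,·) is the Stirling number of the second kind. -/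
open Polynomial

noncomputable section

/-- The polylogarithm of negative integer order: `Li_{−n}(t) = ∑_{k=1}^∞ k^n t^k`
(the `k = 0` term vanishes for `n ≥ 1`). -/
def fbhLi (n : ℕ) (t : ℂ) : ℂ := ∑' k : ℕ, (k : ℂ) ^ n * t ^ k

/-- The Stirling number of the second kind, given by
`k!·S(n,k) = ∑_{i=0}^{k} (−1)^i C(k,i) (k−i)^n`. -/
def stirlingS2 (n k : ℕ) : ℝ :=
  (∑ i ∈ Finset.range (k + 1), (-1 : ℝ) ^ i * (k.choose i) * ((k - i : ℕ) : ℝ) ^ n) /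
    (Nat.factorial k : ℝ)

def auxA (n k : ℕ) : ℝ :=
  ∑ i ∈ Finset.range (k + 1), (-1 : ℝ) ^ i * (k.choose i) * ((k - i : ℕ) : ℝ) ^ n

lemma auxA_zero_succ (k : ℕ) : auxA 0 (k + 1) = 0 := by
  have h := add_pow (-1 : ℝ) 1 (k + 1)
  simp only [neg_add_cancel, one_pow, mul_one] at h
  simp only [auxA, pow_zero, mul_one]
  rw [← h]
  simp

lemma auxA_rec (n k : ℕ) :
    auxA (n + 1) (k + 1) = ((k : ℝ) + 1) * (auxA n (k + 1) + auxA n k) := by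
  have h1 : auxA (n + 1) (k + 1) = ((k : ℝ) + 1) *
      ∑ i ∈ Finset.range (k + 1), (-1 : ℝ) ^ i * (k.choose i) * ((k + 1 - i : ℕ) : ℝ) ^ n := by
    unfold auxA
    rw [Finset.sum_range_succ, Finset.mul_sum]
    simp only [Nat.sub_self, Nat.cast_zero, ne_eq, Nat.add_eq_zero_iff, one_ne_zero, and_false,
      not_false_eq_true, zero_pow, mul_zero, add_zero]
    refine Finset.sum_congr rfl fun i hi => ?_
    have h := Nat.choose_mul_succ_eq k i
    have h' : ((k.choose i : ℕ) : ℝ) * ((k : ℝ) + 1)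
        = ((k + 1).choose i : ℕ) * ((k + 1 - i : ℕ) : ℝ) := by exact_mod_cast h
    rw [pow_succ]
    linear_combination (-(-1 : ℝ) ^ i * ((k + 1 - i : ℕ) : ℝ) ^ n) * h'
  have h2 : auxA n (k + 1) + auxA n k =
      ∑ i ∈ Finset.range (k + 1), (-1 : ℝ) ^ i * (k.choose i) * ((k + 1 - i : ℕ) : ℝ) ^ n := by
    have e : ∑ i ∈ Finset.range (k + 1),
          (-1 : ℝ) ^ i * (k.choose i) * ((k + 1 - i : ℕ) : ℝ) ^ n =
        ∑ i ∈ Finset.range (k + 1 + 1),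
          (-1 : ℝ) ^ i * (k.choose i) * ((k + 1 - i : ℕ) : ℝ) ^ n := by
      rw [Finset.sum_range_succ _ (k + 1)]
      simp
    rw [e]
    unfold auxA
    rw [Finset.sum_range_succ' _ (k + 1), Finset.sum_range_succ' _ (k + 1)]
    simp only [Nat.choose_zero_right]
    rw [add_right_comm, ← Finset.sum_add_distrib]
    congr 1
    refine Finset.sum_congr rfl fun i hi => ?_
    rw [Nat.choose_succ_succ, Nat.add_sub_add_right]
    push_cast
    ring
  rw [h1, h2]

lemma auxA_eq (n k : ℕ) : auxA n k = (k.factorial : ℝ) * (Nat.stirlingSecond n k : ℝ) := by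
  induction n generalizing k with
  | zero =>
    cases k with
    | zero => simp [auxA]
    | succ k => simp [auxA_zero_succ]
  | succ n ih =>
    cases k with
    | zero => simp [auxA]
    | succ k =>
      rw [auxA_rec, ih, ih, Nat.stirlingSecond_succ_succ, Nat.factorial_succ]
      push_cast
      ring

lemma stirlingS2_eq (n k : ℕ) : stirlingS2 n k = (Nat.stirlingSecond n k : ℝ) := by
  have h : stirlingS2 n k = auxA n k / (k.factorial : ℝ) := rfl
  rw [h, auxA_eq]
  field_simp

lemma pow_expand (n x : ℕ) : (x : ℂ) ^ n = ∑ j ∈ Finset.range (n + 1),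
    (-1 : ℂ) ^ (n + j) * (Nat.factorial j : ℂ) * (Nat.stirlingSecond (n + 1) (j + 1) : ℂ) *
      ((x + j).choose j : ℂ) := by
  induction n with
  | zero => simp [Nat.stirlingSecond]
  | succ n ih =>
    have key : ∀ j : ℕ, (x : ℂ) * ((x + j).choose j : ℂ) =
        ((j : ℂ) + 1) * ((x + (j + 1)).choose (j + 1) : ℂ)
          - ((j : ℂ) + 1) * ((x + j).choose j : ℂ) := by
      intro j
      have h := Nat.add_one_mul_choose_eq (x + j) j
      have h' : ((x : ℂ) + j + 1) * ((x + j).choose j : ℂ)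
        = ((x + (j + 1)).choose (j + 1) : ℂ) * ((j : ℂ) + 1) := by exact_mod_cast h
      linear_combination h'
    let a : ℕ → ℂ := fun j => (-1 : ℂ) ^ (n + j) * (Nat.factorial j : ℂ) *
      (Nat.stirlingSecond (n + 1) j : ℂ) * ((x + j).choose j : ℂ)
    let b : ℕ → ℂ := fun j => (-1 : ℂ) ^ (n + j) * (Nat.factorial j : ℂ) * ((j : ℂ) + 1) *
      (Nat.stirlingSecond (n + 1) (j + 1) : ℂ) * ((x + j).choose j : ℂ)
    have hL : (x : ℂ) ^ (n + 1) = ∑ j ∈ Finset.range (n + 1), (-a (j + 1) - b j) := by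
      rw [pow_succ, ih, Finset.sum_mul]
      refine Finset.sum_congr rfl fun j _ => ?_
      simp only [a, b, Nat.factorial_succ]
      push_cast
      linear_combination ((-1 : ℂ) ^ (n + j) * (Nat.factorial j : ℂ) *
        (Nat.stirlingSecond (n + 1) (j + 1) : ℂ)) * key j
    have hR : ∑ j ∈ Finset.range (n + 1 + 1), (-1 : ℂ) ^ (n + 1 + j) * (Nat.factorial j : ℂ) *
        (Nat.stirlingSecond (n + 1 + 1) (j + 1) : ℂ) * ((x + j).choose j : ℂ) =
        ∑ j ∈ Finset.range (n + 1 + 1), (-a j - b j) := by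
      refine Finset.sum_congr rfl fun j _ => ?_
      simp only [a, b]
      rw [Nat.stirlingSecond_succ_succ (n + 1) j]
      push_cast
      ring
    rw [hR, hL, Finset.sum_sub_distrib, Finset.sum_sub_distrib,
      Finset.sum_range_succ' (fun j => -a j), Finset.sum_range_succ b (n + 1)]
    have ha : a 0 = 0 := by simp [a]
    have hb : b (n + 1) = 0 := by
      simp only [b]
      rw [Nat.stirlingSecond_eq_zero_of_lt (by omega)]
      simp
    rw [ha, hb]
    simp

/-- For every positive integer `n` and complex `t` with `|t| < 1`,
`Li_{−n}(t) = ∑_{j=0}^{n} (−1)^{n+j} j! S(n+1, j+1) / (1−t)^{j+1}`. -/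
theorem statement7 (n : ℕ) (hn : 1 ≤ n) (t : ℂ) (ht : ‖t‖ < 1) :
    fbhLi n t = ∑ j ∈ Finset.range (n + 1),
      (-1 : ℂ) ^ (n + j) * (Nat.factorial j : ℂ) * ((stirlingS2 (n + 1) (j + 1) : ℝ) : ℂ) /
        (1 - t) ^ (j + 1) := by
  unfold fbhLi
  have h : HasSum (fun k : ℕ => (k : ℂ) ^ n * t ^ k) (∑ j ∈ Finset.range (n + 1),
      (-1 : ℂ) ^ (n + j) * (Nat.factorial j : ℂ) * ((stirlingS2 (n + 1) (j + 1) : ℝ) : ℂ) /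
        (1 - t) ^ (j + 1)) := by
    have := hasSum_sum (s := Finset.range (n + 1)) fun j _ =>
      (hasSum_choose_mul_geometric_of_norm_lt_one j ht).mul_left
        ((-1 : ℂ) ^ (n + j) * (Nat.factorial j : ℂ) * ((stirlingS2 (n + 1) (j + 1) : ℝ) : ℂ))
    convert this using 1
    · rfl
    · funext k
      rw [pow_expand, Finset.sum_mul]
      refine Finset.sum_congr rfl fun j _ => ?_
      rw [stirlingS2_eq]
      push_cast
      ring
    · refine Finset.sum_congr rfl fun j _ => ?_
      rw [mul_one_div]
  exact h.tsum_eq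
end
end

section
/- For all integers n ≥ 1 and m ≥ 1, the polynomial A_{n,m} has the closed form A_{n,m}(t) = m! Σ_{j=0}^{n} (−1)^{n+j} (m+1)_j S(n+1, j+1) (1−t)^{n−j}, where S(·,·) is the Stirling number of the second kind and (a)_k is the Pochhammer symbol. -/
open Polynomial

noncomputable section

def fbhT (n k : ℕ) : ℝ :=
  ∑ i ∈ Finset.range (k + 1), (-1 : ℝ) ^ i * (k.choose i) * ((k - i : ℕ) : ℝ) ^ n

lemma fbhT_zero_succ (k : ℕ) : fbhT 0 (k + 1) = 0 := by
  have h := Int.alternating_sum_range_choose_of_ne (n := k + 1) (by omega)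
  have h2 := congrArg (Int.cast : ℤ → ℝ) h
  push_cast at h2
  simpa [fbhT] using h2

lemma fbhT_succ_succ (n k : ℕ) :
    fbhT (n + 1) (k + 1) = (k + 1) * (fbhT n (k + 1) + fbhT n k) := by
  have h1 : fbhT (n + 1) (k + 1) = (k + 1) * ∑ i ∈ Finset.range (k + 1),
      (-1 : ℝ) ^ i * (k.choose i) * ((k + 1 - i : ℕ) : ℝ) ^ n := by
    unfold fbhT
    rw [Finset.sum_range_succ, Finset.mul_sum]
    simp only [Nat.sub_self, Nat.cast_zero, pow_succ, mul_zero, add_zero]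
    apply Finset.sum_congr rfl
    intro i _
    have h3 : (k + 1) * k.choose i = (k + 1).choose i * (k + 1 - i) :=
      (Nat.mul_comm _ _).trans (Nat.choose_mul_succ_eq k i)
    have h4 : ((k : ℝ) + 1) * k.choose i = (k + 1).choose i * ((k + 1 - i : ℕ) : ℝ) := by
      exact_mod_cast h3
    linear_combination (-((-1 : ℝ) ^ i * ((k + 1 - i : ℕ) : ℝ) ^ n)) * h4
  have h2 : fbhT n (k + 1) + fbhT n k = ∑ i ∈ Finset.range (k + 1),
      (-1 : ℝ) ^ i * (k.choose i) * ((k + 1 - i : ℕ) : ℝ) ^ n := by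
    unfold fbhT
    have e : ∑ i ∈ Finset.range (k + 1),
      (-1 : ℝ) ^ i * (k.choose i) * ((k + 1 - i : ℕ) : ℝ) ^ n = ∑ i ∈ Finset.range (k + 1 + 1),
      (-1 : ℝ) ^ i * (k.choose i) * ((k + 1 - i : ℕ) : ℝ) ^ n := by
      rw [Finset.sum_range_succ _ (k + 1)]
      simp
    rw [e, Finset.sum_range_succ' _ (k + 1), Finset.sum_range_succ' _ (k + 1)]
    have e2 : ∀ i, (-1 : ℝ) ^ (i + 1) * ((k + 1).choose (i + 1) : ℝ) *
        ((k + 1 - (i + 1) : ℕ) : ℝ) ^ n = (-1 : ℝ) ^ (i + 1) * (k.choose (i + 1)) *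
        ((k + 1 - (i + 1) : ℕ) : ℝ) ^ n - (-1 : ℝ) ^ i * (k.choose i) * ((k - i : ℕ) : ℝ) ^ n := by
      intro i
      rw [Nat.choose_succ_succ, Nat.add_sub_add_right]
      push_cast
      ring
    simp only [e2, Finset.sum_sub_distrib]
    simp
    ring
  rw [h1, h2]

lemma fbhT_eq (n k : ℕ) : fbhT n k = (Nat.factorial k : ℝ) * (Nat.stirlingSecond n k : ℝ) := by
  induction n generalizing k with
  | zero =>
    cases k with
    | zero => simp [fbhT]
    | succ k => simp [fbhT_zero_succ]
  | succ n ih =>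
    cases k with
    | zero => simp [fbhT]
    | succ k =>
      rw [fbhT_succ_succ, ih, ih, Nat.stirlingSecond_succ_succ, Nat.factorial_succ]
      push_cast
      ring

lemma fbh_pow (n k : ℕ) : (k : ℂ) ^ n = ∑ j ∈ Finset.range (n + 1),
    (-1 : ℂ) ^ (n + j) * (Nat.factorial j : ℂ) * (Nat.stirlingSecond (n + 1) (j + 1) : ℂ) *
      ((k + j).choose j : ℂ) := by
  induction n with
  | zero => simp [Nat.stirlingSecond]
  | succ n ih =>
    rw [pow_succ, ih, Finset.sum_mul]
    have e : ∀ j, (-1 : ℂ) ^ (n + j) * (Nat.factorial j : ℂ) *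
        (Nat.stirlingSecond (n + 1) (j + 1) : ℂ) * ((k + j).choose j : ℂ) * k =
        (-1 : ℂ) ^ (n + j) * (Nat.factorial (j + 1) : ℂ) *
        (Nat.stirlingSecond (n + 1) (j + 1) : ℂ) * ((k + (j + 1)).choose (j + 1) : ℂ) +
        (-1 : ℂ) ^ (n + 1 + j) * (Nat.factorial j : ℂ) *
        ((j + 1) * Nat.stirlingSecond (n + 1) (j + 1) : ℂ) * ((k + j).choose j : ℂ) := by
      intro j
      have h := Nat.add_one_mul_choose_eq (k + j) j
      have h' : ((k : ℂ) + j + 1) * (k + j).choose j = (k + (j + 1)).choose (j + 1) * (j + 1) := by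
        exact_mod_cast h
      rw [Nat.factorial_succ]
      push_cast
      linear_combination ((-1 : ℂ) ^ (n + j) * (Nat.factorial j : ℂ) *
        (Nat.stirlingSecond (n + 1) (j + 1) : ℂ)) * h'
    simp only [e, Finset.sum_add_distrib]
    have e3 : ∀ j, (-1 : ℂ) ^ (n + 1 + j) * (Nat.factorial j : ℂ) *
        (Nat.stirlingSecond (n + 1 + 1) (j + 1) : ℂ) * ((k + j).choose j : ℂ) =
        (-1 : ℂ) ^ (n + 1 + j) * (Nat.factorial j : ℂ) *
        (Nat.stirlingSecond (n + 1) j : ℂ) * ((k + j).choose j : ℂ) +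
        (-1 : ℂ) ^ (n + 1 + j) * (Nat.factorial j : ℂ) *
        ((j + 1) * Nat.stirlingSecond (n + 1) (j + 1) : ℂ) * ((k + j).choose j : ℂ) := by
      intro j
      rw [Nat.stirlingSecond_succ_succ]
      push_cast
      ring
    simp only [e3, Finset.sum_add_distrib]
    congr 1
    · rw [Finset.sum_range_succ' _ (n + 1)]
      simp only [Nat.stirlingSecond_succ_zero, Nat.cast_zero, mul_zero, zero_mul, add_zero]
      apply Finset.sum_congr rfl
      intro j _
      rw [show n + 1 + (j + 1) = n + j + 2 by ring, pow_add _ (n + j) 2]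
      simp
    · rw [Finset.sum_range_succ _ (n + 1),
        Nat.stirlingSecond_eq_zero_of_lt (show n + 1 < n + 1 + 1 by omega)]
      simp

lemma fbhLi_eq (n : ℕ) (t : ℂ) (ht : ‖t‖ < 1) : fbhLi n t = ∑ j ∈ Finset.range (n + 1),
    (-1 : ℂ) ^ (n + j) * (Nat.factorial j : ℂ) * (Nat.stirlingSecond (n + 1) (j + 1) : ℂ) *
      (1 / (1 - t) ^ (j + 1)) := by
  have h : HasSum (fun k : ℕ => (k : ℂ) ^ n * t ^ k) (∑ j ∈ Finset.range (n + 1),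
    (-1 : ℂ) ^ (n + j) * (Nat.factorial j : ℂ) * (Nat.stirlingSecond (n + 1) (j + 1) : ℂ) *
      (1 / (1 - t) ^ (j + 1))) := by
    simp only [fbh_pow n, Finset.sum_mul]
    apply hasSum_sum
    intro j _
    simp only [mul_assoc]
    iterate 3 apply HasSum.mul_left
    exact hasSum_choose_mul_geometric_of_norm_lt_one j ht
  exact h.tsum_eq

lemma fbh_deriv (n m : ℕ) : ∀ t : ℂ, ‖t‖ < 1 →
    iteratedDeriv m (fbhLi n) t = ∑ j ∈ Finset.range (n + 1),
    (-1 : ℂ) ^ (n + j) * (Nat.stirlingSecond (n + 1) (j + 1) : ℂ) *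
      ((Nat.factorial (j + m) : ℂ) / (1 - t) ^ (j + m + 1)) := by
  induction m with
  | zero =>
    intro t ht
    rw [iteratedDeriv_zero, fbhLi_eq n t ht]
    apply Finset.sum_congr rfl
    intro j _
    simp only [add_zero]
    ring
  | succ m ih =>
    intro t ht
    have hne : (1 - t) ≠ 0 := by
      intro h
      have : t = 1 := (sub_eq_zero.mp h).symm
      rw [this] at ht
      simp at ht
    rw [iteratedDeriv_succ]
    have hev : iteratedDeriv m (fbhLi n) =ᶠ[nhds t] fun t => ∑ j ∈ Finset.range (n + 1),
        (-1 : ℂ) ^ (n + j) * (Nat.stirlingSecond (n + 1) (j + 1) : ℂ) *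
        ((Nat.factorial (j + m) : ℂ) / (1 - t) ^ (j + m + 1)) := by
      filter_upwards [(isOpen_lt continuous_norm continuous_const).mem_nhds ht] with s hs
      exact ih s hs
    rw [hev.deriv_eq]
    apply HasDerivAt.deriv
    apply HasDerivAt.fun_sum
    intro j _
    apply HasDerivAt.const_mul
    have h1 : HasDerivAt (fun t : ℂ => (1 - t) ^ (j + m + 1))
        (((j + m + 1 : ℕ) : ℂ) * (1 - t) ^ (j + m) * (-1)) t := by
      exact ((hasDerivAt_id t).const_sub 1).fun_pow (j + m + 1)
    have h2 := (hasDerivAt_const t (Nat.factorial (j + m) : ℂ)).fun_div h1 (pow_ne_zero _ hne)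
    convert h2 using 1
    rw [← add_assoc j m 1, Nat.factorial_succ]
    push_cast
    field_simp
    ring

/-- For `n, m ≥ 1`, the polynomial `A_{n,m}` — the unique real polynomial of degree `n`
with `(d^m/dt^m) Li_{−n}(t) = A_{n,m}(t)/(1−t)^{n+m+1}` on the unit disk — has the
closed form `A_{n,m}(t) = m! ∑_{j=0}^{n} (−1)^{n+j} (m+1)_j S(n+1, j+1) (1−t)^{n−j}`,
where `(m+1)_j` is the Pochhammer symbol. -/
theorem statement8 (n m : ℕ) (hn : 1 ≤ n) (hm : 1 ≤ m) (A : Polynomial ℝ)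
    (hdeg : A.natDegree = n)
    (hA : ∀ t : ℂ, ‖t‖ < 1 →
      iteratedDeriv m (fbhLi n) t = Polynomial.aeval t A / (1 - t) ^ (n + m + 1)) :
    A = C (Nat.factorial m : ℝ) * ∑ j ∈ Finset.range (n + 1),
      C ((-1 : ℝ) ^ (n + j) * (((ascPochhammer ℕ j).eval (m + 1) : ℕ) : ℝ) *
          stirlingS2 (n + 1) (j + 1)) * (1 - X) ^ (n - j) := by
  apply Polynomial.eq_of_infinite_eval_eq
  apply (Set.Ioo_infinite (show (0 : ℝ) < 1 by norm_num)).mono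
  intro x hx
  have hxn : ‖(x : ℂ)‖ < 1 := by
    rw [Complex.norm_real, Real.norm_eq_abs, abs_of_pos hx.1]
    exact hx.2
  have h := hA x hxn
  rw [fbh_deriv n m x hxn] at h
  have hA' : Polynomial.aeval (x : ℂ) A = ((A.eval x : ℝ) : ℂ) := by
    have := Polynomial.aeval_algebraMap_apply ℂ x A
    simpa using this
  rw [hA'] at h
  have hr : ∑ j ∈ Finset.range (n + 1),
    (-1 : ℝ) ^ (n + j) * (Nat.stirlingSecond (n + 1) (j + 1) : ℝ) *
      ((Nat.factorial (j + m) : ℝ) / (1 - x) ^ (j + m + 1)) =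
      A.eval x / (1 - x) ^ (n + m + 1) := by
    exact_mod_cast h
  have hne : 1 - x ≠ 0 := by linarith [hx.2]
  rw [eq_div_iff (pow_ne_zero _ hne)] at hr
  show A.eval x = _
  rw [← hr, eval_mul, eval_C, eval_finsetSum, Finset.sum_mul, Finset.mul_sum]
  apply Finset.sum_congr rfl
  intro j hj
  have hj' : j ≤ n := by
    have := Finset.mem_range.mp hj
    omega
  simp only [eval_mul, eval_C, eval_pow, eval_sub, eval_one, eval_X, stirlingS2_eq]
  have hp : (Nat.factorial (j + m) : ℝ) =
      (Nat.factorial m : ℝ) * (((ascPochhammer ℕ j).eval (m + 1) : ℕ) : ℝ) := by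
    rw [ascPochhammer_nat_eq_ascFactorial, add_comm j m, ← Nat.factorial_mul_ascFactorial]
    push_cast
    rfl
  rw [hp, show n + m + 1 = (j + m + 1) + (n - j) by omega, pow_add (1 - x) (j + m + 1) (n - j)]
  field_simp
end
end

section
/- For all integers n ≥ 1 and m ≥ 1, all coefficients of the degree-n polynomial A_{n,m}(t) (the coefficients of t^0, t^1, …, t^n) are strictly positive. -/
open Polynomial

noncomputable section

lemma fbhLi_succ (n : ℕ) (t : ℂ) (ht : ‖t‖ < 1) :
    fbhLi (n + 1) t = t * deriv (fbhLi n) t := by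
  obtain ⟨r, hr1, hr2⟩ := exists_between ht
  have hr0 : 0 ≤ r := (norm_nonneg t).trans hr1.le
  have hu : Summable (fun k : ℕ => (k : ℝ) ^ n * r ^ k) :=
    summable_pow_mul_geometric_of_norm_lt_one n (by rwa [Real.norm_of_nonneg hr0])
  have h := Complex.hasSum_deriv_of_summable_norm (U := Metric.ball (0 : ℂ) r)
    (F := fun (k : ℕ) (t : ℂ) => (k : ℂ) ^ n * t ^ k) (z := t) hu
    (fun k => by fun_prop) Metric.isOpen_ball
    (fun k w hw => by
      have hw' : ‖w‖ ≤ r := by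
        have := mem_ball_zero_iff.mp hw
        exact this.le
      simp only [norm_mul, norm_pow, Complex.norm_natCast]
      gcongr) (by simpa using hr1)
  have h2 := (h.mul_left t).tsum_eq
  have h3 : deriv (fbhLi n) t = deriv (fun w => ∑' k : ℕ, (k : ℂ) ^ n * w ^ k) t := rfl
  rw [h3, ← h2]
  unfold fbhLi
  refine tsum_congr fun k => ?_
  rw [deriv_const_mul _ (by fun_prop)]
  simp only [deriv_pow_field]
  rcases k with _ | k
  · simp
  · simp only [Nat.add_sub_cancel]
    ring

/-- The polynomials `A_{n,m}`. -/
def fbhP (m : ℕ) : ℕ → Polynomial ℝ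
  | 0 => C (m.factorial : ℝ)
  | n + 1 => X * (1 - X) * derivative (fbhP m n) + C ((n : ℝ) + m + 1) * (X * fbhP m n)
      + C (m : ℝ) * ((1 - X) * fbhP m n)

lemma fbhP_coeff_zero (m n : ℕ) : (fbhP m (n + 1)).coeff 0 = m * (fbhP m n).coeff 0 := by
  simp [fbhP, sub_mul, mul_sub, mul_assoc, coeff_C_mul, mul_coeff_zero]

lemma fbhP_coeff_succ (m n i : ℕ) : (fbhP m (n + 1)).coeff (i + 1) =
    ((i : ℝ) + 1 + m) * (fbhP m n).coeff (i + 1) + ((n : ℝ) + 1 - i) * (fbhP m n).coeff i := by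
  rw [fbhP]
  simp only [sub_mul, mul_sub, mul_assoc, coeff_add, coeff_sub, coeff_C_mul, coeff_X_mul,
    one_mul, mul_one]
  rcases i with _ | i
  · simp [coeff_derivative, mul_coeff_zero]
    ring
  · simp only [coeff_X_mul, coeff_derivative]
    push_cast
    ring

lemma fbhP_pos (m : ℕ) (hm : 1 ≤ m) (n : ℕ) :
    (∀ i ≤ n, 0 < (fbhP m n).coeff i) ∧ (∀ i, n < i → (fbhP m n).coeff i = 0) := by
  have hm' : (0 : ℝ) < m := by exact_mod_cast hm
  induction n with
  | zero =>
    constructor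
    · intro i hi
      obtain rfl : i = 0 := by omega
      simp [fbhP, Nat.factorial_pos]
    · intro i hi
      simp [fbhP, coeff_C, hi.ne']
  | succ n ih =>
    constructor
    · intro i hi
      rcases i with _ | i
      · rw [fbhP_coeff_zero]
        exact mul_pos hm' (ih.1 0 (by omega))
      · rw [fbhP_coeff_succ]
        have hi' : (i : ℝ) ≤ n := by exact_mod_cast (by omega : i ≤ n)
        have h1 : 0 < ((n : ℝ) + 1 - i) * (fbhP m n).coeff i :=
          mul_pos (by linarith) (ih.1 i (by omega))
        have h2 : 0 ≤ (fbhP m n).coeff (i + 1) := by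
          rcases le_or_gt (i + 1) n with h | h
          · exact (ih.1 _ h).le
          · exact (ih.2 _ h).ge
        have h3 : 0 ≤ ((i : ℝ) + 1 + m) * (fbhP m n).coeff (i + 1) := by positivity
        linarith
    · intro i hi
      rcases i with _ | i
      · omega
      · rw [fbhP_coeff_succ, ih.2 _ (by omega), ih.2 i (by omega)]
        simp

lemma fbh_ne (t : ℂ) (ht : ‖t‖ < 1) : 1 - t ≠ 0 := by
  intro h
  have : t = 1 := (sub_eq_zero.mp h).symm
  rw [this] at ht
  simp at ht

lemma fbh_ratDeriv (P : Polynomial ℝ) (k : ℕ) (t : ℂ) (ht : 1 - t ≠ 0) :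
    HasDerivAt (fun t : ℂ => aeval t P / (1 - t) ^ k)
      ((aeval t (derivative P) * (1 - t) + k * aeval t P) / (1 - t) ^ (k + 1)) t := by
  have h1 := P.hasDerivAt_aeval t
  have h2 : HasDerivAt (fun t : ℂ => (1 - t) ^ k) (k * (1 - t) ^ (k - 1) * (-1)) t :=
    ((hasDerivAt_id t).const_sub 1).pow k
  refine (h1.div h2 (pow_ne_zero _ ht)).congr_deriv ?_
  rcases k with _ | k
  · simp
    field_simp
  · simp only [Nat.add_sub_cancel]
    field_simp
    ring

lemma fbh_nhds {f g : ℂ → ℂ} (h : ∀ t : ℂ, ‖t‖ < 1 → f t = g t) (t : ℂ) (ht : ‖t‖ < 1) :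
    f =ᶠ[nhds t] g := by
  filter_upwards [Metric.isOpen_ball.mem_nhds (mem_ball_zero_iff.mpr ht)] with w hw
  exact h w (mem_ball_zero_iff.mp hw)

lemma fbh_main (n : ℕ) : ∀ (m : ℕ) (t : ℂ), ‖t‖ < 1 →
    iteratedDeriv m (fbhLi n) t = aeval t (fbhP m n) / (1 - t) ^ (n + m + 1) := by
  induction n with
  | zero =>
    intro m
    induction m with
    | zero =>
      intro t ht
      simp [fbhLi, fbhP, tsum_geometric_of_norm_lt_one ht]
    | succ m ih =>
      intro t ht
      rw [iteratedDeriv_succ, (fbh_nhds ih t ht).deriv_eq,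
        (fbh_ratDeriv _ _ t (fbh_ne t ht)).deriv]
      simp [fbhP, Nat.factorial_succ]
  | succ n ih =>
    have hD : ∀ (m : ℕ) (t : ℂ), ‖t‖ < 1 → HasDerivAt (iteratedDeriv m (fbhLi n))
        (iteratedDeriv (m + 1) (fbhLi n) t) t := by
      intro m t ht
      rw [iteratedDeriv_succ]
      exact ((fbh_ratDeriv _ _ t (fbh_ne t ht)).congr_of_eventuallyEq
        (fbh_nhds (ih m) t ht)).differentiableAt.hasDerivAt
    have hrec : ∀ (m : ℕ) (t : ℂ), ‖t‖ < 1 → iteratedDeriv m (fbhLi (n + 1)) t =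
        t * iteratedDeriv (m + 1) (fbhLi n) t + m * iteratedDeriv m (fbhLi n) t := by
      intro m
      induction m with
      | zero =>
        intro t ht
        simp [fbhLi_succ n t ht]
      | succ m ihm =>
        intro t ht
        rw [iteratedDeriv_succ, (fbh_nhds ihm t ht).deriv_eq]
        have h := ((hasDerivAt_id t).mul (hD (m + 1) t ht)).add
          ((hD m t ht).const_mul (m : ℂ))
        refine (HasDerivAt.deriv h).trans ?_
        simp only [id]
        push_cast
        ring
    intro m t ht
    have hne := fbh_ne t ht
    rw [hrec m t ht, iteratedDeriv_succ, (fbh_nhds (ih m) t ht).deriv_eq,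
        (fbh_ratDeriv _ _ t hne).deriv, ih m t ht]
    rw [show n + 1 + m + 1 = n + m + 1 + 1 by ring]
    simp only [fbhP, map_add, map_mul, map_sub, map_one, aeval_X, aeval_C, Complex.coe_algebraMap]
    field_simp
    push_cast
    ring

/-- For `n, m ≥ 1`, all coefficients (of `t^0, …, t^n`) of the degree-`n` polynomial
`A_{n,m}`, characterized by `(d^m/dt^m) Li_{−n}(t) = A_{n,m}(t)/(1−t)^{n+m+1}` on the
unit disk, are strictly positive. -/
theorem statement10 (n m : ℕ) (hn : 1 ≤ n) (hm : 1 ≤ m) (A : Polynomial ℝ)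
    (hdeg : A.natDegree = n)
    (hA : ∀ t : ℂ, ‖t‖ < 1 →
      iteratedDeriv m (fbhLi n) t = Polynomial.aeval t A / (1 - t) ^ (n + m + 1)) :
    ∀ i ≤ n, 0 < A.coeff i := by
  have hAP : A = fbhP m n := by
    have hinj : Function.Injective (fun x : ℝ => (x : ℂ)) := Complex.ofReal_injective
    refine Polynomial.eq_of_infinite_eval_eq _ _
      ((Set.Ioo_infinite (zero_lt_one (α := ℝ))).mono ?_)
    intro x hx
    have hx1 : ‖(x : ℂ)‖ < 1 := by
      rw [Complex.norm_real, Real.norm_of_nonneg hx.1.le]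
      exact hx.2
    have h := (hA x hx1).symm.trans (fbh_main n m x hx1)
    rw [div_left_inj' (pow_ne_zero _ (fbh_ne _ hx1))] at h
    have e : ∀ P : Polynomial ℝ, aeval (x : ℂ) P = ((P.eval x : ℝ) : ℂ) := fun P =>
      Polynomial.aeval_algebraMap_apply_eq_algebraMap_eval x P
    rw [e, e] at h
    exact hinj h
  rw [hAP]
  exact (fbhP_pos m hm n).1
end
end

section
/- Let p(t) = a_n t^n + ⋯ + a_1 t + a_0 be a polynomial with a_k > 0 for every k = 0, …, n and n ≥ 1. Then every complex zero t of p satisfies min_{0 ≤ i ≤ n−1}(a_i/a_{i+1}) ≤ |t| ≤ max_{0 ≤ i ≤ n−1}(a_i/a_{i+1}). -/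
open Polynomial

noncomputable section

theorem ek_identity {R : Type*} [CommRing R] (a : ℕ → R) (x M : R) (n : ℕ) :
    (x - M) * ∑ i ∈ Finset.range (n + 1), a i * x ^ i
      = a n * x ^ (n + 1)
        - ∑ i ∈ Finset.range n, (M * a (i + 1) - a i) * x ^ (i + 1) - M * a 0 := by
  induction n with
  | zero => simp; ring
  | succ k ih =>
    rw [Finset.sum_range_succ, mul_add, ih, Finset.sum_range_succ _ k]
    ring

theorem ek_pos (a : ℕ → ℝ) (n : ℕ) (ha : ∀ i ≤ n, 0 < a i) (r : ℝ) (hr : 0 ≤ r) :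
    0 < ∑ i ∈ Finset.range (n + 1), a i * r ^ i := by
  apply Finset.sum_pos'
  · intro i hi
    have := ha i (by simpa [Nat.lt_succ_iff] using hi)
    positivity
  · exact ⟨0, by simp, by simpa using ha 0 (Nat.zero_le _)⟩

theorem ek_upper (a : ℕ → ℝ) (n : ℕ) (ha : ∀ i ≤ n, 0 < a i) (M : ℝ) (hM0 : 0 ≤ M)
    (hM : ∀ i < n, a i ≤ M * a (i + 1)) (t : ℂ)
    (ht : ∑ i ∈ Finset.range (n + 1), (a i : ℂ) * t ^ i = 0) : ‖t‖ ≤ M := by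
  by_contra! hlt
  have h1 := ek_identity (fun i => (a i : ℂ)) t (M : ℂ) n
  have h2 := ek_identity a ‖t‖ M n
  have h3 := mul_pos (sub_pos.2 hlt) (ek_pos a n ha ‖t‖ (norm_nonneg t))
  rw [ht, mul_zero] at h1
  have h4 : (a n : ℂ) * t ^ (n + 1)
      = ∑ i ∈ Finset.range n, ((M * a (i + 1) - a i : ℝ) : ℂ) * t ^ (i + 1)
        + ((M * a 0 : ℝ) : ℂ) := by
    push_cast
    linear_combination -h1
  have h5 : ‖(a n : ℂ) * t ^ (n + 1)‖ = a n * ‖t‖ ^ (n + 1) := by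
    rw [norm_mul, norm_pow, Complex.norm_real, Real.norm_of_nonneg (ha n le_rfl).le]
  have h6 : ‖(a n : ℂ) * t ^ (n + 1)‖
      ≤ ∑ i ∈ Finset.range n, (M * a (i + 1) - a i) * ‖t‖ ^ (i + 1) + M * a 0 := by
    rw [h4]
    refine (norm_add_le _ _).trans (add_le_add ((norm_sum_le _ _).trans ?_) ?_)
    · refine Finset.sum_le_sum fun i hi => ?_
      rw [norm_mul, norm_pow, Complex.norm_real, Real.norm_of_nonneg
        (sub_nonneg.2 (hM i (Finset.mem_range.1 hi)))]
    · rw [Complex.norm_real, Real.norm_of_nonneg (mul_nonneg hM0 (ha 0 (Nat.zero_le _)).le)]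
  linarith

theorem ek_lower (a : ℕ → ℝ) (n : ℕ) (ha : ∀ i ≤ n, 0 < a i) (M : ℝ)
    (hM : ∀ i < n, M * a (i + 1) ≤ a i) (t : ℂ)
    (ht : ∑ i ∈ Finset.range (n + 1), (a i : ℂ) * t ^ i = 0) : M ≤ ‖t‖ := by
  by_contra! hlt
  have hM0 : 0 ≤ M := (norm_nonneg t).trans hlt.le
  have h1 := ek_identity (fun i => (a i : ℂ)) t (M : ℂ) n
  have h2 := ek_identity a ‖t‖ M n
  have h3 := mul_pos (sub_pos.2 hlt) (ek_pos a n ha ‖t‖ (norm_nonneg t))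
  rw [ht, mul_zero] at h1
  have hneg (x : ℝ) : ∑ i ∈ Finset.range n, (a i - M * a (i + 1)) * x ^ (i + 1)
      = - ∑ i ∈ Finset.range n, (M * a (i + 1) - a i) * x ^ (i + 1) := by
    rw [← Finset.sum_neg_distrib]
    exact Finset.sum_congr rfl fun i _ => by ring
  have h4 : ((M * a 0 : ℝ) : ℂ)
      = ∑ i ∈ Finset.range n, ((a i - M * a (i + 1) : ℝ) : ℂ) * t ^ (i + 1)
        + (a n : ℂ) * t ^ (n + 1) := by
    have : ∑ i ∈ Finset.range n, ((a i - M * a (i + 1) : ℝ) : ℂ) * t ^ (i + 1)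
        = - ∑ i ∈ Finset.range n, ((M : ℂ) * a (i + 1) - a i) * t ^ (i + 1) := by
      rw [← Finset.sum_neg_distrib]
      exact Finset.sum_congr rfl fun i _ => by push_cast; ring
    rw [this]
    push_cast
    linear_combination h1
  have h5 : ‖((M * a 0 : ℝ) : ℂ)‖ = M * a 0 := by
    rw [Complex.norm_real, Real.norm_of_nonneg (mul_nonneg hM0 (ha 0 (Nat.zero_le _)).le)]
  have h6 : ‖((M * a 0 : ℝ) : ℂ)‖
      ≤ ∑ i ∈ Finset.range n, (a i - M * a (i + 1)) * ‖t‖ ^ (i + 1)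
        + a n * ‖t‖ ^ (n + 1) := by
    rw [h4]
    refine (norm_add_le _ _).trans (add_le_add ((norm_sum_le _ _).trans ?_) ?_)
    · refine Finset.sum_le_sum fun i hi => ?_
      rw [norm_mul, norm_pow, Complex.norm_real, Real.norm_of_nonneg
        (sub_nonneg.2 (hM i (Finset.mem_range.1 hi)))]
    · rw [norm_mul, norm_pow, Complex.norm_real, Real.norm_of_nonneg (ha n le_rfl).le]
  rw [hneg] at h6
  linarith

/-- If `p(t) = a_n t^n + ⋯ + a_0` is a real polynomial of degree `n ≥ 1` with all
coefficients `a_0, …, a_n` strictly positive, then every complex zero `t` of `p`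
satisfies `min_{0 ≤ i < n} (a_i/a_{i+1}) ≤ |t| ≤ max_{0 ≤ i < n} (a_i/a_{i+1})`. -/
theorem statement11 (p : Polynomial ℝ) (hn : 1 ≤ p.natDegree)
    (hpos : ∀ i ≤ p.natDegree, 0 < p.coeff i)
    (t : ℂ) (ht : Polynomial.aeval t p = 0) :
    (Finset.range p.natDegree).inf' (Finset.nonempty_range_iff.mpr (by omega))
        (fun i => p.coeff i / p.coeff (i + 1)) ≤ ‖t‖ ∧
      ‖t‖ ≤ (Finset.range p.natDegree).sup' (Finset.nonempty_range_iff.mpr (by omega))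
        (fun i => p.coeff i / p.coeff (i + 1)) := by
  have hs : ∑ i ∈ Finset.range (p.natDegree + 1), (p.coeff i : ℂ) * t ^ i = 0 := by
    rw [← ht, Polynomial.aeval_eq_sum_range]
    simp [Algebra.smul_def]
  constructor
  · refine ek_lower p.coeff p.natDegree hpos _ (fun i hi => ?_) t hs
    rw [← le_div_iff₀ (hpos (i + 1) hi)]
    exact Finset.inf'_le (fun i => p.coeff i / p.coeff (i + 1)) (Finset.mem_range.2 hi)
  · have key : ∀ i < p.natDegree, p.coeff i / p.coeff (i + 1) ≤
        (Finset.range p.natDegree).sup' (Finset.nonempty_range_iff.mpr (by omega))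
        (fun i => p.coeff i / p.coeff (i + 1)) := fun i hi =>
      Finset.le_sup' (fun i => p.coeff i / p.coeff (i + 1)) (Finset.mem_range.2 hi)
    refine ek_upper p.coeff p.natDegree hpos _ ?_ (fun i hi => ?_) t hs
    · exact (div_pos (hpos 0 (by omega)) (hpos (0 + 1) (by omega))).le.trans (key 0 (by omega))
    · rw [← div_le_iff₀ (hpos (i + 1) hi)]
      exact key i hi
end
end

section
/- For all integers n ≥ 1 and m ≥ 1, the identity A_{n+1,m}(t) = t·A_{n,m+1}(t) + m(1−t)·A_{n,m}(t) holds as polynomials. -/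
open Polynomial

noncomputable section

open Metric in
lemma fbhLi_hasDerivAt (n : ℕ) (t : ℂ) (ht : ‖t‖ < 1) :
    HasDerivAt (fbhLi n) (∑' k : ℕ, (k : ℂ) ^ n * ((k : ℂ) * t ^ (k - 1))) t := by
  obtain ⟨r, hr1, hr2⟩ := exists_between ht
  have hr0 : 0 < r := lt_of_le_of_lt (norm_nonneg t) hr1
  have hs : Summable (fun k : ℕ => ((k : ℝ) ^ (n + 1) * r ^ k) * r⁻¹) := by
    apply Summable.mul_right
    exact summable_pow_mul_geometric_of_norm_lt_one (n + 1)
      (by rw [Real.norm_eq_abs, abs_of_pos hr0]; exact hr2)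
  refine hasDerivAt_tsum_of_isPreconnected (g := fun (k : ℕ) (y : ℂ) => (k : ℂ) ^ n * y ^ k)
    (g' := fun (k : ℕ) (y : ℂ) => (k : ℂ) ^ n * ((k : ℂ) * y ^ (k - 1))) hs
    (isOpen_ball (x := (0 : ℂ)) (ε := r)) (convex_ball _ _).isPreconnected ?_ ?_
    (y₀ := t) (by simpa using hr1) ?_ (by simpa using hr1)
  · intro k y _
    exact (hasDerivAt_pow k y).const_mul _
  · intro k y hy
    have hy' : ‖y‖ < r := by simpa using hy
    rcases k with _ | k
    · simp
    · simp only [norm_mul, norm_pow, Complex.norm_natCast, Nat.add_sub_cancel]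
      have h1 : ‖y‖ ^ k ≤ r ^ k := by gcongr
      have h2 : (((k + 1 : ℕ) : ℝ) ^ (n + 1) * r ^ (k + 1)) * r⁻¹
          = ((k + 1 : ℕ) : ℝ) ^ n * (((k + 1 : ℕ) : ℝ) * r ^ k) := by
        field_simp
        ring
      rw [h2]
      gcongr
  · exact summable_pow_mul_geometric_of_norm_lt_one n ht

lemma fbhLi_iter (n m : ℕ) : ∀ t : ℂ, ‖t‖ < 1 →
    iteratedDeriv m (fbhLi (n + 1)) t
      = t * iteratedDeriv (m + 1) (fbhLi n) t + m * iteratedDeriv m (fbhLi n) t := by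
  have hopen : IsOpen {t : ℂ | ‖t‖ < 1} := isOpen_lt continuous_norm continuous_const
  have han : AnalyticOnNhd ℂ (fbhLi n) {t : ℂ | ‖t‖ < 1} := by
    apply DifferentiableOn.analyticOnNhd _ hopen
    intro t ht
    exact (fbhLi_hasDerivAt n t ht).differentiableAt.differentiableWithinAt
  have hd : ∀ j : ℕ, ∀ t : ℂ, ‖t‖ < 1 → HasDerivAt (iteratedDeriv j (fbhLi n))
      (iteratedDeriv (j + 1) (fbhLi n) t) t := by
    intro j t ht
    rw [iteratedDeriv_succ, hasDerivAt_deriv_iff, iteratedDeriv_eq_iterate]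
    exact (han.iterated_deriv j t ht).differentiableAt
  induction m with
  | zero =>
    intro t ht
    simp [fbhLi_succ n t ht]
  | succ m ih =>
    intro t ht
    have he : iteratedDeriv m (fbhLi (n + 1)) =ᶠ[nhds t] fun t =>
        t * iteratedDeriv (m + 1) (fbhLi n) t + m * iteratedDeriv m (fbhLi n) t :=
      Filter.eventually_of_mem (hopen.mem_nhds ht) ih
    rw [iteratedDeriv_succ, he.deriv_eq]
    have := ((hasDerivAt_id t).mul (hd (m + 1) t ht)).add ((hd m t ht).const_mul (m : ℂ))
    refine Eq.trans (HasDerivAt.deriv this) ?_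
    simp only [id]
    push_cast
    ring

/-- For `n, m ≥ 1`, the polynomials `A_{n,m}` (characterized as the degree-`n` real
polynomials with `(d^m/dt^m) Li_{−n}(t) = A_{n,m}(t)/(1−t)^{n+m+1}` on the unit disk)
satisfy the polynomial identity `A_{n+1,m}(t) = t·A_{n,m+1}(t) + m(1−t)·A_{n,m}(t)`. -/
theorem statement14 (n m : ℕ) (hn : 1 ≤ n) (hm : 1 ≤ m) (P Q R : Polynomial ℝ)
    (hPdeg : P.natDegree = n) (hQdeg : Q.natDegree = n) (hRdeg : R.natDegree = n + 1)
    (hP : ∀ t : ℂ, ‖t‖ < 1 →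
      iteratedDeriv m (fbhLi n) t = Polynomial.aeval t P / (1 - t) ^ (n + m + 1))
    (hQ : ∀ t : ℂ, ‖t‖ < 1 →
      iteratedDeriv (m + 1) (fbhLi n) t = Polynomial.aeval t Q / (1 - t) ^ (n + (m + 1) + 1))
    (hR : ∀ t : ℂ, ‖t‖ < 1 →
      iteratedDeriv m (fbhLi (n + 1)) t = Polynomial.aeval t R / (1 - t) ^ ((n + 1) + m + 1)) :
    R = X * Q + C (m : ℝ) * (1 - X) * P := by
  have key : ∀ t : ℂ, ‖t‖ < 1 →
      aeval t R = aeval t (X * Q + C (m : ℝ) * (1 - X) * P) := by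
    intro t ht
    have h1 : (1 - t) ≠ 0 := by
      intro h
      have : t = 1 := (sub_eq_zero.mp h).symm
      simp [this] at ht
    have h := fbhLi_iter n m t ht
    rw [hP t ht, hQ t ht, hR t ht] at h
    have e1 : n + 1 + m + 1 = (n + m + 1) + 1 := by ring
    have e2 : n + (m + 1) + 1 = (n + m + 1) + 1 := by ring
    rw [e1, e2, pow_succ] at h
    have h2 : (1 - t) ^ (n + m + 1) ≠ 0 := pow_ne_zero _ h1
    field_simp at h
    simp only [map_add, map_mul, map_sub, map_one, aeval_X, aeval_C, map_natCast]
    linear_combination h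
  apply Polynomial.eq_of_infinite_eval_eq
  apply Set.Infinite.mono _ (Set.Ioo_infinite (show (0 : ℝ) < 1 by norm_num))
  intro x hx
  have h := key (x : ℂ) (by
    rw [Complex.norm_real, Real.norm_eq_abs, abs_of_pos hx.1]; exact hx.2)
  have hc : ∀ p : Polynomial ℝ, aeval (x : ℂ) p = ((p.eval x : ℝ) : ℂ) := by
    intro p
    have := Polynomial.aeval_algebraMap_apply ℂ x p
    simpa using this
  rw [hc, hc] at h
  exact Complex.ofReal_injective h
end
end

section
/- For every fixed integer n ≥ 1, there exists a unique positive integer m_0(n) such that for every integer m ≥ 1: the m-th derivative of Li_{−n} has no zeros in the open unit disk {t ∈ ℂ : |t| < 1} if and only if m ≥ m_0(n). (Equivalently, the polynomial A_{n,m} has no zeros in the open unit disk if and only if m ≥ m_0(n).) -/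
open Polynomial

noncomputable section

/-- `k ^ n` as a combination of the binomials `C(k+i, i)`. -/
theorem fbh_exists_coeff (n : ℕ) : ∃ c : ℕ → ℂ, c n ≠ 0 ∧ ∀ k : ℕ,
    (k : ℂ) ^ n = ∑ i ∈ Finset.range (n + 1), c i * ((k + i).choose i : ℂ) := by
  induction n with
  | zero => exact ⟨fun _ => 1, one_ne_zero, fun k => by simp⟩
  | succ n ih =>
    obtain ⟨c, hc, h⟩ := ih
    refine ⟨fun i => (i : ℂ) * c (i - 1) - if i ≤ n then ((i : ℂ) + 1) * c i else 0, ?_, ?_⟩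
    · have : ((n : ℂ) + 1) ≠ 0 := by exact_mod_cast Nat.succ_ne_zero n
      simpa [hc] using this
    · intro k
      simp only [sub_mul, Finset.sum_sub_distrib]
      rw [Finset.sum_range_succ', Finset.sum_range_succ (n := n + 1), pow_succ, h k,
        Finset.sum_mul]
      have e : ∀ i ∈ Finset.range (n + 1),
          (if i ≤ n then ((i : ℂ) + 1) * c i else 0) * ((k + i).choose i : ℂ)
            = ((i : ℂ) + 1) * c i * ((k + i).choose i : ℂ) := by
        intro i hi
        rw [if_pos (Nat.lt_succ_iff.mp (Finset.mem_range.mp hi))]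
      rw [Finset.sum_congr rfl e]
      simp only [Nat.cast_zero, zero_mul, add_zero, Nat.not_succ_le_self, if_false]
      rw [← Finset.sum_sub_distrib]
      refine Finset.sum_congr rfl fun i _ => ?_
      have h1 := Nat.add_one_mul_choose_eq (k + i) i
      have h2 : ((k : ℂ) + i + 1) * ((k + i).choose i : ℂ)
          = ((k + (i + 1)).choose (i + 1) : ℂ) * (i + 1) := by exact_mod_cast h1
      simp only [Nat.add_sub_cancel, Nat.cast_add, Nat.cast_one]
      linear_combination c i * h2

/-- The polynomial in `s = 1/(1-t)` representing the `m`-th derivative. -/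
def fbhQ (c : ℕ → ℂ) (n m : ℕ) : ℂ[X] :=
  ∑ i ∈ Finset.range (n + 1),
    C (c i * ((i + m).factorial : ℂ) / (i.factorial : ℂ)) * X ^ (i + m + 1)

theorem fbhQ_succ (c : ℕ → ℂ) (n m : ℕ) :
    fbhQ c n (m + 1) = X ^ 2 * derivative (fbhQ c n m) := by
  unfold fbhQ
  rw [derivative_sum, Finset.mul_sum]
  refine Finset.sum_congr rfl fun i _ => ?_
  rw [derivative_C_mul_X_pow, ← add_assoc, Nat.factorial_succ]
  have : c i * (((i + m + 1) * (i + m).factorial : ℕ) : ℂ) / (i.factorial : ℂ)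
      = c i * ((i + m).factorial : ℂ) / (i.factorial : ℂ) * ((i + m + 1 : ℕ) : ℂ) := by
    push_cast; ring
  rw [this, Nat.add_sub_cancel]
  ring

theorem fbhQ_coeff (c : ℕ → ℂ) (n m : ℕ) (hc : c n ≠ 0) :
    (fbhQ c n m).coeff (n + m + 1) ≠ 0 := by
  unfold fbhQ
  rw [finsetSum_coeff, Finset.sum_eq_single n]
  · rw [coeff_C_mul_X_pow, if_pos rfl]
    exact div_ne_zero (mul_ne_zero hc (by exact_mod_cast Nat.factorial_ne_zero _))
      (by exact_mod_cast Nat.factorial_ne_zero _)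
  · intro i _ hi
    rw [coeff_C_mul_X_pow, if_neg (by omega)]
  · intro h
    exact absurd (Finset.mem_range.mpr (Nat.lt_succ_self n)) h

theorem fbh_one_sub_ne {t : ℂ} (ht : ‖t‖ < 1) : 1 - t ≠ 0 := by
  intro h
  have : t = 1 := (sub_eq_zero.mp h).symm
  rw [this] at ht
  simp at ht

theorem fbhLi_eq_s17 (c : ℕ → ℂ) (n : ℕ)
    (h : ∀ k : ℕ, (k : ℂ) ^ n = ∑ i ∈ Finset.range (n + 1), c i * ((k + i).choose i : ℂ))
    {t : ℂ} (ht : ‖t‖ < 1) : fbhLi n t = (fbhQ c n 0).eval (1 - t)⁻¹ := by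
  unfold fbhLi
  have H : HasSum (fun k : ℕ => ∑ i ∈ Finset.range (n + 1),
      c i * (((k + i).choose i : ℂ) * t ^ k))
      (∑ i ∈ Finset.range (n + 1), c i * (1 / (1 - t) ^ (i + 1))) :=
    hasSum_sum fun i _ => (hasSum_choose_mul_geometric_of_norm_lt_one i ht).mul_left (c i)
  have e : (fun k : ℕ => (k : ℂ) ^ n * t ^ k) = fun k : ℕ => ∑ i ∈ Finset.range (n + 1),
      c i * (((k + i).choose i : ℂ) * t ^ k) := by
    funext k
    rw [h k, Finset.sum_mul]
    exact Finset.sum_congr rfl fun i _ => by ring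
  rw [e, H.tsum_eq]
  unfold fbhQ
  rw [eval_finsetSum]
  refine Finset.sum_congr rfl fun i _ => ?_
  have : (i.factorial : ℂ) ≠ 0 := by exact_mod_cast Nat.factorial_ne_zero _
  simp only [eval_mul, eval_C, eval_pow, eval_X, add_zero, mul_div_cancel_right₀ _ this,
    inv_pow, one_div]

theorem fbhLi_iteratedDeriv (c : ℕ → ℂ) (n : ℕ)
    (h : ∀ k : ℕ, (k : ℂ) ^ n = ∑ i ∈ Finset.range (n + 1), c i * ((k + i).choose i : ℂ))
    (m : ℕ) : ∀ t : ℂ, ‖t‖ < 1 →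
      iteratedDeriv m (fbhLi n) t = (fbhQ c n m).eval (1 - t)⁻¹ := by
  induction m with
  | zero => intro t ht; rw [iteratedDeriv_zero]; exact fbhLi_eq_s17 c n h ht
  | succ m ih =>
    intro t ht
    rw [iteratedDeriv_succ]
    have hev : iteratedDeriv m (fbhLi n) =ᶠ[nhds t]
        fun t => (fbhQ c n m).eval (1 - t)⁻¹ := by
      have : Metric.ball (0 : ℂ) 1 ∈ nhds t :=
        Metric.isOpen_ball.mem_nhds (by simpa using ht)
      filter_upwards [this] with u hu
      exact ih u (by simpa using hu)
    rw [hev.deriv_eq]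
    have h0 := fbh_one_sub_ne ht
    have h1 : HasDerivAt (fun t : ℂ => (1 - t)⁻¹) (-(-1) / (1 - t) ^ 2) t :=
      ((hasDerivAt_id t).const_sub 1).fun_inv h0
    have h2 := ((fbhQ c n m).hasDerivAt ((1 - t)⁻¹)).comp t h1
    have h3 : deriv (fun t => (fbhQ c n m).eval (1 - t)⁻¹) t = _ := h2.deriv
    rw [h3, fbhQ_succ, eval_mul, eval_pow, eval_X, inv_pow]
    ring

/-- The disk corresponds to the half plane `Re s > 1/2`. -/
theorem fbh_re_gt {t : ℂ} (ht : ‖t‖ < 1) : 1 / 2 < ((1 - t)⁻¹).re := by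
  have h0 : 0 < Complex.normSq (1 - t) := Complex.normSq_pos.mpr (fbh_one_sub_ne ht)
  have h1 : Complex.normSq t < 1 := by
    rw [Complex.normSq_eq_norm_sq]
    nlinarith [norm_nonneg t]
  rw [Complex.inv_re, lt_div_iff₀ h0]
  rw [Complex.normSq_apply] at *
  simp only [Complex.sub_re, Complex.sub_im, Complex.one_re, Complex.one_im]
  nlinarith

theorem fbh_norm_lt {s : ℂ} (hs : 1 / 2 < s.re) :
    ‖1 - s⁻¹‖ < 1 ∧ (1 - (1 - s⁻¹))⁻¹ = s := by
  have hs0 : s ≠ 0 := by rintro rfl; norm_num at hs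
  refine ⟨?_, by simp⟩
  have e : 1 - s⁻¹ = (s - 1) / s := by field_simp
  rw [e, norm_div, div_lt_one (norm_pos_iff.mpr hs0)]
  refine lt_of_pow_lt_pow_left₀ 2 (norm_nonneg _) ?_
  rw [← Complex.normSq_eq_norm_sq, ← Complex.normSq_eq_norm_sq, Complex.normSq_apply,
    Complex.normSq_apply]
  simp only [Complex.sub_re, Complex.sub_im, Complex.one_re, Complex.one_im]
  nlinarith

theorem fbhQ_step (c : ℕ → ℂ) (n m : ℕ) (hc : c n ≠ 0)
    (h : ∀ s : ℂ, 1 / 2 < s.re → (fbhQ c n m).eval s ≠ 0) :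
    ∀ s : ℂ, 1 / 2 < s.re → (fbhQ c n (m + 1)).eval s ≠ 0 := by
  intro s hs h0
  have hs0 : s ≠ 0 := by rintro rfl; norm_num at hs
  have hco := fbhQ_coeff c n m hc
  rw [fbhQ_succ, eval_mul, eval_pow, eval_X] at h0
  have hd : (derivative (fbhQ c n m)).eval s = 0 :=
    (mul_eq_zero.mp h0).resolve_left (pow_ne_zero 2 hs0)
  have hdeg : 0 < (fbhQ c n m).degree := by
    rw [← natDegree_pos_iff_degree_pos]
    have := le_natDegree_of_ne_zero hco
    omega
  have hdne : derivative (fbhQ c n m) ≠ 0 := by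
    intro hz
    have h1 := congrArg (fun p => coeff p (n + m)) hz
    simp only [coeff_derivative, coeff_zero] at h1
    refine mul_ne_zero hco ?_ h1
    exact_mod_cast Nat.succ_ne_zero (n + m)
  have hmem : s ∈ (derivative (fbhQ c n m)).rootSet ℂ := by
    rw [mem_rootSet, coe_aeval_eq_eval]
    exact ⟨hdne, hd⟩
  have hhull := rootSet_derivative_subset_convexHull_rootSet hdeg hmem
  have hsub : (fbhQ c n m).rootSet ℂ ⊆ {z : ℂ | z.re ≤ 1 / 2} := by
    intro z hz
    rw [mem_rootSet, coe_aeval_eq_eval] at hz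
    by_contra hcon
    exact h z (not_le.mp hcon) hz.2
  have := convexHull_min hsub (convex_halfSpace_re_le (1 / 2)) hhull
  exact absurd hs (not_lt.mpr this)

theorem fbhQ_large (c : ℕ → ℂ) (n : ℕ) (hc : c n ≠ 0) :
    ∃ m : ℕ, 1 ≤ m ∧ ∀ s : ℂ, 1 / 2 < s.re → (fbhQ c n m).eval s ≠ 0 := by
  set D : ℝ := ∑ i ∈ Finset.range n, ‖c i‖ * 2 ^ (n - i) with hD
  have hcn : 0 < ‖c n‖ := norm_pos_iff.mpr hc
  have hnf : (0 : ℝ) < (n.factorial : ℝ) := by exact_mod_cast Nat.factorial_pos n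
  obtain ⟨m, hm⟩ := exists_nat_gt (D / (‖c n‖ / n.factorial))
  rw [div_lt_iff₀ (div_pos hcn hnf)] at hm
  refine ⟨m + 1, by omega, ?_⟩
  intro s hs h0
  have hsn : 1 / 2 < ‖s‖ := lt_of_lt_of_le hs (Complex.re_le_norm s)
  have hspos : 0 < ‖s‖ := by linarith
  unfold fbhQ at h0
  rw [eval_finsetSum, Finset.sum_range_succ] at h0
  simp only [eval_mul, eval_C, eval_pow, eval_X] at h0
  set N := m + 1 with hN
  set B : ℝ := ((n + N).factorial : ℝ) * ‖s‖ ^ (n + N + 1) with hB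
  have hBpos : 0 < B := mul_pos (by exact_mod_cast Nat.factorial_pos _) (pow_pos hspos _)
  have h1 : ‖c n * ((n + N).factorial : ℂ) / (n.factorial : ℂ) * s ^ (n + N + 1)‖
      = ‖c n‖ / n.factorial * B := by
    rw [norm_mul, norm_div, norm_mul, norm_pow, Complex.norm_natCast, Complex.norm_natCast]
    ring
  have h2 : ∀ i ∈ Finset.range n,
      ‖c i * ((i + N).factorial : ℂ) / (i.factorial : ℂ) * s ^ (i + N + 1)‖ * m
        ≤ ‖c i‖ * 2 ^ (n - i) * B := by
    intro i hi
    have hin : i < n := Finset.mem_range.mp hi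
    rw [norm_mul, norm_div, norm_mul, norm_pow, Complex.norm_natCast, Complex.norm_natCast]
    have hf : ((i + N).factorial : ℝ) * m ≤ (n + N).factorial := by
      have a1 : (i + N).factorial * m ≤ (i + N + 1).factorial := by
        rw [Nat.factorial_succ, mul_comm]
        exact Nat.mul_le_mul_right _ (by omega)
      have a2 := a1.trans (Nat.factorial_le (show i + N + 1 ≤ n + N by omega))
      exact_mod_cast a2
    have hp : ‖s‖ ^ (i + N + 1) ≤ 2 ^ (n - i) * ‖s‖ ^ (n + N + 1) := by
      have b1 : n + N + 1 = (n - i) + (i + N + 1) := by omega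
      rw [b1, pow_add ‖s‖ (n - i), ← mul_assoc, ← mul_pow]
      exact le_mul_of_one_le_left (pow_nonneg hspos.le _)
        (one_le_pow₀ (by linarith))
    have hd : ‖c i‖ * ((i + N).factorial : ℝ) / (i.factorial : ℝ)
        ≤ ‖c i‖ * ((i + N).factorial : ℝ) :=
      div_le_self (by positivity) (by exact_mod_cast Nat.factorial_pos i)
    calc ‖c i‖ * ((i + N).factorial : ℝ) / (i.factorial : ℝ) * ‖s‖ ^ (i + N + 1) * m
        ≤ ‖c i‖ * ((i + N).factorial : ℝ) * ‖s‖ ^ (i + N + 1) * m := by gcongr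
      _ = ‖c i‖ * (((i + N).factorial : ℝ) * m) * ‖s‖ ^ (i + N + 1) := by ring
      _ ≤ ‖c i‖ * ((n + N).factorial : ℝ) * (2 ^ (n - i) * ‖s‖ ^ (n + N + 1)) := by gcongr
      _ = ‖c i‖ * 2 ^ (n - i) * B := by rw [hB]; ring
  have h3 : ‖c n‖ / n.factorial * B * m ≤ D * B := by
    rw [← h1, ← neg_eq_of_add_eq_zero_right h0, norm_neg]
    calc _ ≤ (∑ i ∈ Finset.range n,
          ‖c i * ((i + N).factorial : ℂ) / (i.factorial : ℂ) * s ^ (i + N + 1)‖) * m :=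
        mul_le_mul_of_nonneg_right (norm_sum_le _ _) (Nat.cast_nonneg m)
      _ ≤ D * B := by
        rw [hD, Finset.sum_mul, Finset.sum_mul]
        exact Finset.sum_le_sum h2
  have h4 := mul_lt_mul_of_pos_right hm hBpos
  linarith

/-- For every fixed `n ≥ 1`, there is a unique positive integer `m₀` such that for every
`m ≥ 1`, the `m`-th derivative of `Li_{−n}` has no zeros in the open unit disk if and
only if `m ≥ m₀`.  (This characterizes when the Fock–Bargmann–Hartogs domain `D_{n,m}`
is a Lu Qi-Keng domain.) -/
theorem statement17 (n : ℕ) (hn : 1 ≤ n) :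
    ∃! m₀ : ℕ, 1 ≤ m₀ ∧ ∀ m : ℕ, 1 ≤ m →
      ((∀ t : ℂ, ‖t‖ < 1 → iteratedDeriv m (fbhLi n) t ≠ 0) ↔ m₀ ≤ m) := by
  classical
  obtain ⟨c, hc, h⟩ := fbh_exists_coeff n
  have key : ∀ m : ℕ, (∀ t : ℂ, ‖t‖ < 1 → iteratedDeriv m (fbhLi n) t ≠ 0) ↔
      ∀ s : ℂ, 1 / 2 < s.re → (fbhQ c n m).eval s ≠ 0 := by
    intro m
    constructor
    · intro H s hs
      obtain ⟨h1, h2⟩ := fbh_norm_lt hs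
      have := H _ h1
      rwa [fbhLi_iteratedDeriv c n h m _ h1, h2] at this
    · intro H t ht
      rw [fbhLi_iteratedDeriv c n h m t ht]
      exact H _ (fbh_re_gt ht)
  simp only [key]
  have hex := fbhQ_large c n hc
  refine ⟨Nat.find hex, ⟨(Nat.find_spec hex).1, fun m hm => ⟨fun H => Nat.find_min' hex ⟨hm, H⟩,
    fun H => ?_⟩⟩, ?_⟩
  · induction m, H using Nat.le_induction with
    | base => exact (Nat.find_spec hex).2
    | succ k hk ih => exact fbhQ_step c n k hc (ih ((Nat.find_spec hex).1.trans hk))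
  · rintro y ⟨hy, H⟩
    apply le_antisymm
    · exact (H _ (Nat.find_spec hex).1).mp (Nat.find_spec hex).2
    · exact Nat.find_min' hex ⟨hy, (H y hy).mpr le_rfl⟩
end
end
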